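/- Let n ≥ 4, let k satisfy 3 ≤ k ≤ n−1, and let S ⊆ {0,…,n−1} with |S| = k be a support set that is aperiodic, i.e., S is not an arithmetic progression {a, a+d, a+2d, …, a+(k−1)d}. For c ∈ ℂ^S, let x(c) ∈ ℂⁿ be the signal with x(c)_i = c_i for i ∈ S and x(c)_i = 0 otherwise. Then the set of c ∈ (ℂ\{0})^S for which there exists a signal x′ ∈ ℂⁿ with at most k nonzero entries whose autocorrelation equals that of x(c) and which is not equivalent to x(c), has Lebesgue measure zero in ℂ^S ≅ ℂᵏ. -/

import Mathlib

open MeasureTheory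

/-- Extension of a signal `x ∈ ℂⁿ` by zero to all of `ℤ`. -/
noncomputable def extZ {n : ℕ} (x : Fin n → ℂ) (i : ℤ) : ℂ :=
  if h : 0 ≤ i ∧ i < (n : ℤ) then x ⟨i.toNat, by omega⟩ else 0

/-- The autocorrelation of a signal `x ∈ ℂⁿ`:
`a_m = Σ_{j=0}^{n−1−m} x_j conj(x_{j+m})`. -/
noncomputable def autocorr {n : ℕ} (x : Fin n → ℂ) (m : ℕ) : ℂ :=
  ∑ j ∈ Finset.range (n - m), extZ x (j : ℤ) * (starRingEnd ℂ) (extZ x ((j : ℤ) + (m : ℤ)))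

/-- Two signals `x, x′ ∈ ℂⁿ` are equivalent up to time-shift, conjugate-flip and global
phase. -/
def equivSig {n : ℕ} (x x' : Fin n → ℂ) : Prop :=
  ∃ (c : ℂ) (m : ℤ), ‖c‖ = 1 ∧
    ((∀ j : ℤ, extZ x' j = c * extZ x (j - m)) ∨
     (∀ j : ℤ, extZ x' j = c * (starRingEnd ℂ) (extZ x (m - j))))

/-- The signal of length `n` with values `c` on the support `S` and `0` elsewhere. -/
noncomputable def sigOn {n : ℕ} (S : Finset ℕ) (c : ↥S → ℂ) : Fin n → ℂ :=
  fun i => if h : (i : ℕ) ∈ S then c ⟨(i : ℕ), h⟩ else 0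

/-!
Put the signal into a polynomial `f`, and let `f~` be `f` with its coefficients conjugated and
reversed. After shifting, equality of autocorrelations becomes `f f~ = g g~`, and unique
factorization turns this into `f = A B`, `g = u A B~` with `u` unimodular. Let `K` be the field of
algebraic numbers: it is countable and stable under conjugation, so for almost every `c` the
values `c` together with their conjugates are algebraically independent over `K`.

Call an exponent of a polynomial a pivot if its coefficient is not a `K`-combination of the lower
ones, and let `I`, `J` be the pivots of `A`, `B`. If the products of pivot coefficients of two
polynomials are linearly independent over `K`, the sums of their pivots lie in the support of the
product. The coefficients of `A` are algebraic over `K(c)` and those of `B~` over `K(conj c)`, and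
the algebraic closures of these two fields are linearly disjoint over `K`; hence
`|I| + |J| - 1 ≤ |supp g| ≤ k`. Conversely the `k` independent values `c` are polynomials in
`|I| + |J| - 1` pivot coefficients, one of them being normalised. So these coefficients are
themselves algebraically independent, which puts `I + J` inside `S` with
`|I + J| = |I| + |J| - 1 = k`. If `|I|, |J| ≥ 2`, this makes `S = I + J` an arithmetic progression.
Otherwise `A` or `B` is a scalar multiple of a polynomial over `K`; its roots lie in `K` and
annihilate `f`, whose coefficients are linearly independent over `K`, so that factor is a monomial
and `g` is a trivial solution.
-/

section Transcendence

lemma encard_range_le_card {κ α : Type*} [Fintype κ] (y : κ → α) :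
    (Set.range y).encard ≤ Fintype.card κ := by
  rw [← Set.image_univ, ← ENat.card_eq_coe_fintype_card, ← Set.encard_univ]
  exact Set.encard_image_le y Set.univ

variable {K E ι κ : Type*} [Field K] [Field E] [Algebra K E] [Fintype ι] {c : ι → E}

lemma card_le_eRk_of_isAlgebraic_adjoin {s : Set E} (hc : AlgebraicIndependent K c)
    (hs : ∀ i, IsAlgebraic (Algebra.adjoin K s) (c i)) :
    Fintype.card ι ≤ (AlgebraicIndependent.matroid K E).eRk s := by
  set M := AlgebraicIndependent.matroid K E
  have hindep : M.Indep (Set.range c) :=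
    AlgebraicIndependent.matroid_indep_iff.2 hc.to_subtype_range
  have hsub : Set.range c ⊆ M.closure s := by
    rw [AlgebraicIndependent.matroid_closure_eq]
    rintro _ ⟨i, rfl⟩
    exact hs i
  calc (Fintype.card ι : ℕ∞) = (Set.range c).encard := by
        rw [← Set.image_univ, hc.injective.encard_image, Set.encard_univ,
          ENat.card_eq_coe_fintype_card]
    _ = M.eRk (Set.range c) := hindep.eRk_eq_encard.symm
    _ ≤ M.eRk (M.closure s) := M.eRk_mono hsub
    _ = M.eRk s := M.eRk_closure_eq s

variable [Fintype κ] {y : κ → E}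

lemma card_le_card_of_isAlgebraic_adjoin_range (hc : AlgebraicIndependent K c)
    (hy : ∀ i, IsAlgebraic (Algebra.adjoin K (Set.range y)) (c i)) :
    Fintype.card ι ≤ Fintype.card κ :=
  Nat.cast_le.1 <| (card_le_eRk_of_isAlgebraic_adjoin hc hy).trans <|
    (Matroid.eRk_le_encard _ _).trans (encard_range_le_card y)

lemma algebraicIndependent_of_isAlgebraic_adjoin_range (hc : AlgebraicIndependent K c)
    (hy : ∀ i, IsAlgebraic (Algebra.adjoin K (Set.range y)) (c i))
    (hcard : Fintype.card κ ≤ Fintype.card ι) : AlgebraicIndependent K y := by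
  have hrank := (Nat.cast_le.2 hcard).trans (card_le_eRk_of_isAlgebraic_adjoin hc hy)
  have hinj : Function.Injective y := by
    rw [← Set.injOn_univ]
    refine Set.finite_univ.injOn_of_encard_image_eq (le_antisymm (Set.encard_image_le y _) ?_)
    rw [Set.image_univ, Set.encard_univ, ENat.card_eq_coe_fintype_card]
    exact hrank.trans (Matroid.eRk_le_encard _ _)
  refine .of_subtype_range hinj (AlgebraicIndependent.matroid_indep_iff.1 ?_)
  rw [Matroid.indep_iff_eRk_eq_encard_of_finite (Set.finite_range y)]
  exact le_antisymm (Matroid.eRk_le_encard _ _) ((encard_range_le_card y).trans hrank)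

end Transcendence

section NullSets

lemma eval_fin_cons {R : Type*} [CommSemiring R] {n : ℕ} (a : R) (y : Fin n → R)
    (p : MvPolynomial (Fin (n + 1)) R) :
    MvPolynomial.eval (Fin.cons a y : Fin (n + 1) → R) p =
      MvPolynomial.eval y ((MvPolynomial.finSuccEquiv R n p).eval (MvPolynomial.C a)) := by
  rw [MvPolynomial.eval_eq_eval_mv_eval', Polynomial.eval_map, ← Polynomial.eval₂_at_apply,
    MvPolynomial.eval_C]

lemma ae_eval_C_ofReal_ne_zero {σ : Type*} {P : Polynomial (MvPolynomial σ ℂ)} (hP : P ≠ 0) :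
    ∀ᵐ a : ℝ, P.eval (MvPolynomial.C (a : ℂ)) ≠ 0 := by
  have hinj : Function.Injective fun a : ℝ => (MvPolynomial.C (a : ℂ) : MvPolynomial σ ℂ) :=
    (MvPolynomial.C_injective σ ℂ).comp Complex.ofReal_injective
  exact ((Polynomial.finite_setOfPred_isRoot hP).preimage hinj.injOn).countable.ae_notMem _

lemma volume_eval_ofReal_eq_zero {n : ℕ} {p : MvPolynomial (Fin n) ℂ} (hp : p ≠ 0) :
    volume {x : Fin n → ℝ | MvPolynomial.eval (fun i => (x i : ℂ)) p = 0} = 0 := by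
  induction n with
  | zero =>
    obtain ⟨y, hy⟩ : ∃ y, MvPolynomial.eval y p ≠ 0 := by
      by_contra! h
      exact hp (MvPolynomial.funext fun y => by rw [h, map_zero])
    convert measure_empty (μ := (volume : Measure (Fin 0 → ℝ)))
    exact Set.eq_empty_of_forall_notMem fun x hx => hy (by rwa [Subsingleton.elim y])
  | succ n ih =>
    have hcont : Continuous fun x : Fin (n + 1) → ℝ =>
        MvPolynomial.eval (fun i => (x i : ℂ)) p :=
      (MvPolynomial.continuous_eval p).comp (by fun_prop)
    have hmeas := (isClosed_eq hcont (continuous_const (y := (0 : ℂ)))).measurableSet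
    have hpres := (volume_preserving_piFinSuccAbove (fun _ : Fin (n + 1) => ℝ) 0).symm
    rw [← hpres.measure_preimage hmeas.nullMeasurableSet, Measure.volume_eq_prod,
      Measure.measure_prod_null (hpres.measurable hmeas)]
    have hP : MvPolynomial.finSuccEquiv ℂ n p ≠ 0 := by simpa using hp
    filter_upwards [ae_eval_C_ofReal_ne_zero hP] with a ha
    refine (congrArg volume ?_).trans (ih ha)
    ext y
    have hcons : (fun i => (((MeasurableEquiv.piFinSuccAbove (fun _ : Fin (n + 1) => ℝ) 0).symm
        (a, y) i : ℝ) : ℂ)) = (Fin.cons (a : ℂ) (fun i => (y i : ℂ)) : Fin (n + 1) → ℂ) := by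
      ext i
      refine Fin.cases ?_ (fun i => ?_) i <;>
        simp [MeasurableEquiv.piFinSuccAbove, Fin.insertNthEquiv]
    simp only [Set.mem_preimage, Set.mem_ofPred_eq, hcons, eval_fin_cons]

variable (K : Type*) [Field K] [Countable K] [Algebra K ℂ]

lemma ae_algebraicIndependent_ofReal (n : ℕ) :
    ∀ᵐ x : Fin n → ℝ, AlgebraicIndependent K (fun i => (x i : ℂ)) := by
  have hcount : Countable (MvPolynomial (Fin n) K) := by
    rw [← Cardinal.mk_le_aleph0_iff]
    exact MvPolynomial.cardinalMk_le_max_lift.trans (by simp)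
  have hnull (p : {p : MvPolynomial (Fin n) K // p ≠ 0}) :
      ∀ᵐ x : Fin n → ℝ, MvPolynomial.aeval (fun i => (x i : ℂ)) p.1 ≠ 0 := by
    have hmap : MvPolynomial.map (algebraMap K ℂ) p.1 ≠ 0 :=
      (map_ne_zero_iff _ (MvPolynomial.map_injective _ (algebraMap K ℂ).injective)).2 p.2
    simpa only [ae_iff, not_not, MvPolynomial.aeval_def, MvPolynomial.eval_map] using
      volume_eval_ofReal_eq_zero hmap
  filter_upwards [ae_all_iff.2 hnull] with x hx
  rw [algebraicIndependent_iff]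
  exact fun p => not_imp_not.1 fun hp => hx ⟨p, hp⟩

lemma ae_algebraicIndependent_coord {V σ : Type*} [NormedAddCommGroup V] [NormedSpace ℝ V]
    [MeasurableSpace V] [BorelSpace V] [Finite σ] (b : Module.Basis σ ℝ V)
    (μ : Measure V) [μ.IsAddHaarMeasure] :
    ∀ᵐ v ∂μ, AlgebraicIndependent K (fun s => ((b.repr v s : ℝ) : ℂ)) := by
  let e := Finite.equivFin σ
  have : FiniteDimensional ℝ V := b.finiteDimensional_of_finite
  let L := (b.reindex e).equivFunL
  have : (μ.map L).IsAddHaarMeasure := L.isAddHaarMeasure_map μ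
  have hac : μ.map L ≪ volume := Measure.absolutelyContinuous_isAddHaarMeasure _ _
  have hqmp : Measure.QuasiMeasurePreserving L μ volume := ⟨L.continuous.measurable, hac⟩
  filter_upwards [hqmp.ae (ae_algebraicIndependent_ofReal K (Nat.card σ))] with v hv
  simpa [L, Function.comp_def] using hv.comp e e.injective

lemma exists_algebraMap_eq_I (K : Type*) [Field K] [IsAlgClosed K] [Algebra K ℂ] :
    ∃ r : K, algebraMap K ℂ r = Complex.I := by
  obtain ⟨r, hr⟩ := IsAlgClosed.exists_pow_nat_eq (-1 : K) two_pos
  have hsq : algebraMap K ℂ r ^ 2 = Complex.I ^ 2 := by rw [← map_pow, hr]; simp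
  rcases sq_eq_sq_iff_eq_or_eq_neg.1 hsq with h | h
  · exact ⟨r, h⟩
  · exact ⟨-r, by rw [map_neg, h, neg_neg]⟩

lemma ae_algebraicIndependent_sumElim_star {ι : Type*} [Fintype ι] [IsAlgClosed K] :
    ∀ᵐ c : ι → ℂ, AlgebraicIndependent K (Sum.elim c (star c)) := by
  obtain ⟨r, hr⟩ := exists_algebraMap_eq_I K
  let b := Pi.basis fun _ : ι => Complex.basisOneI
  filter_upwards [ae_algebraicIndependent_coord K b volume] with c hc
  refine algebraicIndependent_of_isAlgebraic_adjoin_range hc ?_ (by simp [mul_two])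
  rintro ⟨i, j⟩
  set T := Algebra.adjoin K (Set.range (Sum.elim c (star c)))
  have hc_mem : c i ∈ T := Algebra.subset_adjoin ⟨Sum.inl i, rfl⟩
  have hstar_mem : star (c i) ∈ T := Algebra.subset_adjoin ⟨Sum.inr i, rfl⟩
  suffices h : ((b.repr c ⟨i, j⟩ : ℝ) : ℂ) ∈ T from isAlgebraic_algebraMap (⟨_, h⟩ : T)
  fin_cases j
  · have hre : ((c i).re : ℂ) = (2⁻¹ : K) • (c i + star (c i)) := by
      rw [Algebra.smul_def, map_inv₀, map_ofNat, Complex.re_eq_add_conj, Complex.star_def]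
      ring
    simpa [b, Pi.basis_repr, hre] using T.smul_mem (T.add_mem hc_mem hstar_mem) 2⁻¹
  · have him : ((c i).im : ℂ) = (2 * r)⁻¹ • (c i - star (c i)) := by
      rw [Algebra.smul_def, map_inv₀, map_mul, map_ofNat, hr, Complex.im_eq_sub_conj,
        Complex.star_def]
      ring
    simpa [b, Pi.basis_repr, him] using T.smul_mem (T.sub_mem hc_mem hstar_mem) (2 * r)⁻¹

end NullSets

section LinearDisjointness

open TensorProduct

variable {K : Type*} [Field K]

lemma exists_algHom_apply_ne_zero [IsAlgClosed K] {B : Type*} [CommRing B] [IsReduced B]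
    [Algebra K B] [Algebra.FiniteType K B] {b : B} (hb : b ≠ 0) : ∃ φ : B →ₐ[K] K, φ b ≠ 0 := by
  have : IsJacobsonRing B := isJacobsonRing_of_finiteType (A := K)
  have hbot : (⊥ : Ideal B).jacobson = ⊥ := IsJacobsonRing.out ‹_› Ideal.isRadical_bot
  obtain ⟨M, hM, hbM⟩ : ∃ M : Ideal B, M.IsMaximal ∧ b ∉ M := by
    by_contra! h
    exact hb <| Ideal.mem_bot.1 <| hbot ▸ Ideal.mem_sInf.2 fun {M} hM => h M hM.2
  let _ := Ideal.Quotient.field M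
  have : Module.Finite K (B ⧸ M) := finite_of_finite_type_of_isJacobsonRing K (B ⧸ M)
  let e := AlgEquiv.ofBijective (Algebra.ofId K (B ⧸ M))
    IsAlgClosed.algebraMap_bijective_of_isIntegral
  refine ⟨e.symm.toAlgHom.comp (Ideal.Quotient.mkₐ K M), ?_⟩
  simpa [Ideal.Quotient.eq_zero_iff_mem] using hbM

lemma repr_rid_map {A B σ : Type*} [CommRing A] [CommRing B] [Algebra K A] [Algebra K B]
    [DecidableEq σ] (β : Module.Basis σ K A) (φ : B →ₐ[K] K) (x : A ⊗[K] B) (i : σ) :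
    β.repr (Algebra.TensorProduct.rid K K A (Algebra.TensorProduct.map (.id K A) φ x)) i =
      φ (TensorProduct.equivFinsuppOfBasisLeft β x i) := by
  induction x with
  | zero => simp
  | tmul a b => simp [mul_comm]
  | add x y hx hy => simp_all

lemma noZeroDivisors_tensorProduct_of_finiteType [IsAlgClosed K] (A B : Type*) [CommRing A]
    [NoZeroDivisors A] [CommRing B] [NoZeroDivisors B] [Algebra K A] [Algebra K B]
    [Algebra.FiniteType K B] : NoZeroDivisors (A ⊗[K] B) := by
  classical
  let β := Module.Basis.ofVectorSpace K A
  let coord (x : A ⊗[K] B) := TensorProduct.equivFinsuppOfBasisLeft β x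
  have hcoord {x : A ⊗[K] B} (hx : x ≠ 0) : ∃ i, coord x i ≠ 0 := by
    by_contra! h
    exact hx <| (TensorProduct.equivFinsuppOfBasisLeft (N := B) β).map_eq_zero_iff.1
      (Finsupp.ext h)
  refine ⟨fun {x y} hxy => ?_⟩
  by_contra! hne
  obtain ⟨⟨i, hi⟩, ⟨j, hj⟩⟩ := And.intro (hcoord hne.1) (hcoord hne.2)
  obtain ⟨φ, hφ⟩ := exists_algHom_apply_ne_zero (K := K) (mul_ne_zero hi hj)
  rw [map_mul] at hφ
  let ev := (Algebra.TensorProduct.rid K K A).toAlgHom.comp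
    (Algebra.TensorProduct.map (AlgHom.id K A) φ)
  have hev (z : A ⊗[K] B) (hz : ev z = 0) (s) : φ (coord z s) = 0 := by
    rw [← repr_rid_map]
    exact (congrArg (β.repr · s) hz).trans (by simp)
  rcases mul_eq_zero.1 ((map_mul ev x y).symm.trans (by rw [hxy, map_zero])) with h | h
  · exact hφ (by rw [hev x h, zero_mul])
  · exact hφ (by rw [hev y h, mul_zero])

lemma baseChange_subalgebra_mono (A : Type*) {B : Type*} [CommRing A] [CommRing B] [Algebra K A]
    [Algebra K B] : Monotone fun D : Subalgebra K B => D.baseChange A := by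
  rintro D D' hD _ ⟨x, rfl⟩
  refine ⟨Algebra.TensorProduct.map (AlgHom.id A A) (Subalgebra.inclusion hD) x, ?_⟩
  induction x with
  | zero => simp
  | tmul a b => simp
  | add x y hx hy => simp only [map_add, hx, hy]

lemma noZeroDivisors_tensorProduct [IsAlgClosed K] (A B : Type*) [CommRing A]
    [NoZeroDivisors A] [CommRing B] [NoZeroDivisors B] [Algebra K A] [Algebra K B] :
    NoZeroDivisors (A ⊗[K] B) := by
  refine ⟨fun {x y} hxy => ?_⟩
  obtain ⟨D, hDfg, ⟨x, rfl⟩, ⟨y, rfl⟩⟩ : ∃ D : Subalgebra K B, D.FG ∧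
      x ∈ D.baseChange A ∧ y ∈ D.baseChange A := by
    obtain ⟨D₁, hfg₁, hx⟩ := exists_fg_and_mem_baseChange x
    obtain ⟨D₂, hfg₂, hy⟩ := exists_fg_and_mem_baseChange y
    exact ⟨D₁ ⊔ D₂, hfg₁.sup hfg₂, baseChange_subalgebra_mono A le_sup_left hx,
      baseChange_subalgebra_mono A le_sup_right hy⟩
  set incl := Algebra.TensorProduct.map (AlgHom.id A A) D.val
  have hincl : Function.Injective incl :=
    Module.Flat.lTensor_preserves_injective_linearMap D.val.toLinearMap Subtype.val_injective
  have : Algebra.FiniteType K D := D.fg_iff_finiteType.1 hDfg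
  have := noZeroDivisors_tensorProduct_of_finiteType (K := K) A D
  have hmul : x * y = 0 := hincl ((map_mul incl x y).trans (hxy.trans (map_zero incl).symm))
  exact (mul_eq_zero.1 hmul).imp (fun h => (congrArg incl h).trans (map_zero incl))
    (fun h => (congrArg incl h).trans (map_zero incl))

lemma isAlgebraic_adjoin_apply {A B : Type*} [CommRing A] [CommRing B] [Algebra K A] [Algebra K B]
    {φ : A →ₐ[K] B} (hφ : Function.Injective φ) {s : Set A} {t : Set B} (hst : Set.MapsTo φ s t)
    {a : A} (ha : IsAlgebraic (Algebra.adjoin K s) a) :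
    IsAlgebraic (Algebra.adjoin K t) (φ a) := by
  have hmap : ∀ x ∈ Algebra.adjoin K s, φ x ∈ Algebra.adjoin K t := fun x hx =>
    Algebra.adjoin_mono hst.image_subset (φ.map_adjoin s ▸ Subalgebra.mem_map.2 ⟨x, hx, rfl⟩)
  let f : Algebra.adjoin K s →ₐ[K] Algebra.adjoin K t :=
    (φ.comp (Algebra.adjoin K s).val).codRestrict _ fun x => hmap x x.2
  refine ha.ringHom_of_comp_eq f φ (fun x y hxy => ?_) rfl
  exact Subtype.ext (hφ (congrArg Subtype.val hxy))

lemma isAlgebraic_adjoin_of_apply {A B : Type*} [CommRing A] [CommRing B] [Algebra K A]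
    [Algebra K B] {φ : A →ₐ[K] B} (hφ : Function.Injective φ) {s : Set A} {a : A}
    (ha : IsAlgebraic (Algebra.adjoin K (φ '' s)) (φ a)) : IsAlgebraic (Algebra.adjoin K s) a := by
  let f : Algebra.adjoin K s →ₐ[K] Algebra.adjoin K (φ '' s) :=
    (φ.comp (Algebra.adjoin K s).val).codRestrict _ fun x =>
      φ.map_adjoin s ▸ Subalgebra.mem_map.2 ⟨x, x.2, rfl⟩
  refine ha.of_ringHom_of_comp_eq f φ (fun ⟨y, hy⟩ => ?_) hφ rfl
  obtain ⟨x, hx, rfl⟩ := Subalgebra.mem_map.1 (φ.map_adjoin s ▸ hy)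
  exact ⟨⟨x, hx⟩, rfl⟩

lemma injective_of_algebraicIndependent_comp {T E ι : Type*} [CommRing T] [NoZeroDivisors T]
    [CommRing E] [Algebra K T] [Algebra K E] (f : T →ₐ[K] E) {x : ι → T}
    (hx : ∀ t : T, IsAlgebraic (Algebra.adjoin K (Set.range x)) t)
    (hfx : AlgebraicIndependent K (f ∘ x)) : Function.Injective f := by
  refine (injective_iff_map_eq_zero f).2 fun t ht => ?_
  by_contra ht0
  obtain ⟨⟨a, ha⟩, ha0, q, hq⟩ :=
    (hx t).exists_nonzero_dvd (mem_nonZeroDivisors_of_ne_zero ht0)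
  obtain ⟨p, rfl⟩ : a ∈ (MvPolynomial.aeval x).range :=
    Algebra.adjoin_range_eq_range_aeval K x ▸ ha
  have hp : MvPolynomial.aeval (f ∘ x) p = 0 := by
    have hfq : f (MvPolynomial.aeval x p) = f (t * q) := congrArg f hq
    rwa [map_mul, ht, zero_mul, MvPolynomial.comp_aeval_apply] at hfq
  exact ha0 (Subtype.ext (by simp [hfx.eq_zero_of_aeval_eq_zero p hp]))

lemma isAlgebraic_adjoin_tensorProduct {A B ι κ : Type*} [CommRing A] [CommRing B]
    [Nontrivial A] [Nontrivial B] [Algebra K A] [Algebra K B] [NoZeroDivisors (A ⊗[K] B)]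
    {x : ι → A} {y : κ → B} (hx : ∀ a : A, IsAlgebraic (Algebra.adjoin K (Set.range x)) a)
    (hy : ∀ b : B, IsAlgebraic (Algebra.adjoin K (Set.range y)) b) (t : A ⊗[K] B) :
    IsAlgebraic (Algebra.adjoin K (Set.range
      (Sum.elim (fun i => x i ⊗ₜ[K] (1 : B)) (fun j => (1 : A) ⊗ₜ[K] y j)))) t := by
  have : IsDomain (A ⊗[K] B) := NoZeroDivisors.to_isDomain _
  have hleft (a : A) := isAlgebraic_adjoin_apply (φ := Algebra.TensorProduct.includeLeft)
    (Algebra.TensorProduct.includeLeft_injective (S := K) (algebraMap K B).injective)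
    (t := Set.range (Sum.elim (fun i => x i ⊗ₜ[K] (1 : B)) (fun j => (1 : A) ⊗ₜ[K] y j)))
    (by rintro _ ⟨i, rfl⟩; exact ⟨Sum.inl i, rfl⟩) (hx a)
  have hright (b : B) := isAlgebraic_adjoin_apply (φ := Algebra.TensorProduct.includeRight)
    (Algebra.TensorProduct.includeRight_injective (algebraMap K A).injective)
    (t := Set.range (Sum.elim (fun i => x i ⊗ₜ[K] (1 : B)) (fun j => (1 : A) ⊗ₜ[K] y j)))
    (by rintro _ ⟨j, rfl⟩; exact ⟨Sum.inr j, rfl⟩) (hy b)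
  induction t with
  | zero => exact isAlgebraic_zero
  | tmul a b => simpa using (hleft a).mul (hright b)
  | add t u ht hu => exact ht.add hu

variable {E ι κ : Type*} [Field E] [Algebra K E] {c : ι → E} {d : κ → E}

variable (K) in
/-- The relative algebraic closure of `K[s]` in `E`, as a `K`-subalgebra of `E`. -/
noncomputable def algClosureAdjoin (s : Set E) : Subalgebra K E :=
  (Subalgebra.algebraicClosure (Algebra.adjoin K s) E).restrictScalars K

lemma subset_algClosureAdjoin (s : Set E) : s ⊆ algClosureAdjoin K s := fun x hx =>
  isAlgebraic_algebraMap (⟨x, Algebra.subset_adjoin hx⟩ : Algebra.adjoin K s)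

lemma isAlgebraic_adjoin_algClosureAdjoin (x : algClosureAdjoin K (Set.range c)) :
    IsAlgebraic (Algebra.adjoin K (Set.range fun i =>
      (⟨c i, subset_algClosureAdjoin _ ⟨i, rfl⟩⟩ : algClosureAdjoin K (Set.range c)))) x := by
  refine isAlgebraic_adjoin_of_apply (φ := (algClosureAdjoin K _).val) Subtype.val_injective ?_
  rw [← Set.range_comp]
  exact x.2

lemma linearDisjoint_algClosureAdjoin [IsAlgClosed K]
    (hcd : AlgebraicIndependent K (Sum.elim c d)) :
    (algClosureAdjoin K (Set.range c)).LinearDisjoint (algClosureAdjoin K (Set.range d)) := by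
  have := noZeroDivisors_tensorProduct (K := K) (algClosureAdjoin K (Set.range c))
    (algClosureAdjoin K (Set.range d))
  rw [Subalgebra.linearDisjoint_iff_injective]
  refine injective_of_algebraicIndependent_comp _ (isAlgebraic_adjoin_tensorProduct
    isAlgebraic_adjoin_algClosureAdjoin isAlgebraic_adjoin_algClosureAdjoin) ?_
  convert hcd using 1
  ext (i | j) <;> simp

lemma linearIndependent_mul_of_isAlgebraic_adjoin [IsAlgClosed K] {I J : Type*} {a : I → E}
    {b : J → E} (hcd : AlgebraicIndependent K (Sum.elim c d))
    (ha : LinearIndependent K a) (hac : ∀ i, IsAlgebraic (Algebra.adjoin K (Set.range c)) (a i))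
    (hb : LinearIndependent K b) (hbd : ∀ j, IsAlgebraic (Algebra.adjoin K (Set.range d)) (b j)) :
    LinearIndependent K fun p : I × J => a p.1 * b p.2 :=
  let a' (i : I) : algClosureAdjoin K (Set.range c) := ⟨a i, hac i⟩
  let b' (j : J) : algClosureAdjoin K (Set.range d) := ⟨b j, hbd j⟩
  (linearDisjoint_algClosureAdjoin hcd).linearIndependent_mul_of_flat_left (a := a') (b := b')
    (.of_comp (Subalgebra.val _).toLinearMap ha) (.of_comp (Subalgebra.val _).toLinearMap hb)

end LinearDisjointness

section SumSets

open scoped Pointwise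

/-- A finite set of natural numbers that is an arithmetic progression `a, a + d, a + 2d, …`; the
number of terms is the cardinality, so a step `d = 0` allows at most one element. -/
def IsArithProg (S : Finset ℕ) : Prop :=
  ∃ a d : ℕ, S = Finset.image (fun i => a + i * d) (Finset.range S.card)

variable {I J : Finset ℕ}

lemma card_filter_lt_orderEmbOfFin_add (hIJ : (I + J).card ≤ I.card + J.card - 1)
    (i : Fin I.card) (j : Fin J.card) :
    {x ∈ I + J | x < I.orderEmbOfFin rfl i + J.orderEmbOfFin rfl j}.card = (i : ℕ) + j := by
  set α := I.orderEmbOfFin rfl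
  set β := J.orderEmbOfFin rfl
  have hmem (i' j') : α i' + β j' ∈ I + J :=
    Finset.add_mem_add (I.orderEmbOfFin_mem rfl i') (J.orderEmbOfFin_mem rfl j')
  have hcard_low := cauchy_davenport_add_of_linearOrder_isCancelAdd
    (s := (Finset.Iic i).map α.toEmbedding) (t := (Finset.Iic j).map β.toEmbedding)
    (by simp) (by simp)
  have hcard_high := cauchy_davenport_add_of_linearOrder_isCancelAdd
    (s := (Finset.Ici i).map α.toEmbedding) (t := (Finset.Ici j).map β.toEmbedding)
    (by simp) (by simp)
  have hlow : (Finset.Iic i).map α.toEmbedding + (Finset.Iic j).map β.toEmbedding ⊆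
      insert (α i + β j) {x ∈ I + J | x < α i + β j} := by
    refine Finset.add_subset_iff.2 fun x hx y hy => ?_
    obtain ⟨i', hi, rfl⟩ := Finset.mem_map.1 hx
    obtain ⟨j', hj, rfl⟩ := Finset.mem_map.1 hy
    rw [Finset.mem_Iic] at hi hj
    rw [Finset.mem_insert, Finset.mem_filter]
    exact (add_le_add (α.monotone hi) (β.monotone hj)).eq_or_lt.imp_right fun h => ⟨hmem i' j', h⟩
  have hhigh : (Finset.Ici i).map α.toEmbedding + (Finset.Ici j).map β.toEmbedding ⊆
      {x ∈ I + J | ¬ x < α i + β j} := by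
    refine Finset.add_subset_iff.2 fun x hx y hy => ?_
    obtain ⟨i', hi, rfl⟩ := Finset.mem_map.1 hx
    obtain ⟨j', hj, rfl⟩ := Finset.mem_map.1 hy
    rw [Finset.mem_Ici] at hi hj
    rw [Finset.mem_filter, not_lt]
    exact ⟨hmem i' j', add_le_add (α.monotone hi) (β.monotone hj)⟩
  have hcard_low' := Finset.card_le_card hlow
  have hcard_high' := Finset.card_le_card hhigh
  rw [Finset.card_insert_of_notMem (by simp)] at hcard_low'
  simp only [Finset.card_map, Fin.card_Iic, Fin.card_Ici] at hcard_low hcard_high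
  have := Finset.card_filter_add_card_filter_not (s := I + J) (· < α i + β j)
  omega

lemma orderEmbOfFin_add_eq_of_add_eq (hIJ : (I + J).card ≤ I.card + J.card - 1)
    {i i' : Fin I.card} {j j' : Fin J.card} (h : (i : ℕ) + j = i' + j') :
    I.orderEmbOfFin rfl i + J.orderEmbOfFin rfl j =
      I.orderEmbOfFin rfl i' + J.orderEmbOfFin rfl j' := by
  suffices hle : ∀ (i i' : Fin I.card) (j j' : Fin J.card), (i : ℕ) + j = i' + j' →
      I.orderEmbOfFin rfl i + J.orderEmbOfFin rfl j ≤
        I.orderEmbOfFin rfl i' + J.orderEmbOfFin rfl j' from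
    le_antisymm (hle _ _ _ _ h) (hle _ _ _ _ h.symm)
  intro i i' j j' h
  by_contra! hlt
  set x := I.orderEmbOfFin rfl i' + J.orderEmbOfFin rfl j'
  set z := I.orderEmbOfFin rfl i + J.orderEmbOfFin rfl j
  have hx : x ∈ I + J :=
    Finset.add_mem_add (I.orderEmbOfFin_mem rfl i') (J.orderEmbOfFin_mem rfl j')
  have hss : {w ∈ I + J | w < x} ⊂ {w ∈ I + J | w < z} :=
    Finset.ssubset_iff_of_subset (Finset.monotone_filter_right _ fun w _ hw => hw.trans hlt) |>.2
      ⟨x, by simp [hx, hlt]⟩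
  have := Finset.card_lt_card hss
  rw [card_filter_lt_orderEmbOfFin_add hIJ, card_filter_lt_orderEmbOfFin_add hIJ] at this
  omega

lemma eq_add_mul_of_forall_succ {p d : ℕ} {α : Fin p → ℕ} (hp : 0 < p)
    (hα : ∀ m (hm : m + 1 < p), α ⟨m + 1, hm⟩ = α ⟨m, by omega⟩ + d) (i : Fin p) :
    α i = α ⟨0, hp⟩ + i * d := by
  obtain ⟨m, hm⟩ := i
  induction m with
  | zero => simp
  | succ m ih => rw [hα, ih, add_mul, one_mul, add_assoc]

lemma image_range_add_image_range {a b d p q : ℕ} (hp : 0 < p) (hq : 0 < q) :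
    Finset.image (fun i => a + i * d) (Finset.range p) +
      Finset.image (fun i => b + i * d) (Finset.range q) =
    Finset.image (fun i => a + b + i * d) (Finset.range (p + q - 1)) := by
  ext x
  simp only [Finset.mem_add, Finset.mem_image, Finset.mem_range]
  constructor
  · rintro ⟨_, ⟨i, hi, rfl⟩, _, ⟨j, hj, rfl⟩, rfl⟩
    exact ⟨i + j, by omega, by ring⟩
  · rintro ⟨t, ht, rfl⟩
    obtain ⟨i, j, hi, hj, rfl⟩ : ∃ i j, i < p ∧ j < q ∧ i + j = t :=
      ⟨min t (p - 1), t - min t (p - 1), by omega, by omega, by omega⟩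
    exact ⟨_, ⟨i, hi, rfl⟩, _, ⟨j, hj, rfl⟩, by ring⟩

lemma eq_image_range_of_orderEmbOfFin {a d : ℕ}
    (hI : ∀ i, I.orderEmbOfFin rfl i = a + i * d) :
    I = Finset.image (fun i => a + i * d) (Finset.range I.card) := by
  ext x
  rw [← Finset.mem_coe, ← Finset.range_orderEmbOfFin I rfl]
  simp only [Set.mem_range, hI, Finset.mem_image, Finset.mem_range, Fin.exists_iff, exists_prop]

lemma isArithProg_add_of_card_add_le (hI : 2 ≤ I.card) (hJ : 2 ≤ J.card)
    (hIJ : (I + J).card ≤ I.card + J.card - 1) : IsArithProg (I + J) := by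
  set α := I.orderEmbOfFin rfl
  set β := J.orderEmbOfFin rfl
  have hI₀ : 0 < I.card := by omega
  have hJ₀ : 0 < J.card := by omega
  have hcard : (I + J).card = I.card + J.card - 1 :=
    hIJ.antisymm (cauchy_davenport_add_of_linearOrder_isCancelAdd
      (Finset.card_pos.1 hI₀) (Finset.card_pos.1 hJ₀))
  obtain ⟨d, hd⟩ : ∃ d, β ⟨1, hJ⟩ = β ⟨0, hJ₀⟩ + d :=
    Nat.exists_eq_add_of_le (β.monotone (Fin.mk_le_mk.2 zero_le_one))
  have hαd := eq_add_mul_of_forall_succ (α := α) (d := d) hI₀ fun m hm => by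
    have : α ⟨m + 1, hm⟩ + β ⟨0, hJ₀⟩ = α ⟨m, by omega⟩ + β ⟨1, hJ⟩ :=
      orderEmbOfFin_add_eq_of_add_eq hIJ rfl
    omega
  have hβd := eq_add_mul_of_forall_succ (α := β) (d := d) hJ₀ fun m hm => by
    have : α ⟨0, hI₀⟩ + β ⟨m + 1, hm⟩ = α ⟨1, hI⟩ + β ⟨m, by omega⟩ :=
      orderEmbOfFin_add_eq_of_add_eq hIJ (by dsimp only; omega)
    have hd' : α ⟨1, hI⟩ = α ⟨0, hI₀⟩ + 1 * d := hαd ⟨1, hI⟩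
    omega
  refine ⟨α ⟨0, hI₀⟩ + β ⟨0, hJ₀⟩, d, ?_⟩
  rw [hcard, ← image_range_add_image_range hI₀ hJ₀,
    ← eq_image_range_of_orderEmbOfFin hαd, ← eq_image_range_of_orderEmbOfFin hβd]

lemma IsArithProg.of_image_add_right {S : Finset ℕ} {t : ℕ}
    (h : IsArithProg (S.image (· + t))) : IsArithProg S := by
  obtain ⟨a, d, h⟩ := h
  rw [Finset.card_image_of_injective _ (add_left_injective t)] at h
  obtain rfl | hS := S.eq_empty_or_nonempty
  · exact ⟨0, 0, by simp⟩
  obtain ⟨b, -, rfl⟩ : ∃ b ∈ S, b + t = a := by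
    rw [← Finset.mem_image, h, Finset.mem_image]
    exact ⟨0, by simpa using hS, by simp⟩
  refine ⟨b, d, Finset.image_injective (add_left_injective t) ?_⟩
  rw [h, Finset.image_image]
  congr! 2
  simp [add_right_comm]

end SumSets

section Pivots

open Polynomial
open scoped Pointwise

variable {K E : Type*} [Field K] [Field E] [Algebra K E] {A B : E[X]}

open Classical in
/-- The exponents at which the coefficient of `A` leaves the `K`-span of the lower coefficients.
The coefficients at the pivots form a `K`-basis of the span of all the coefficients of `A`. -/
noncomputable def pivots (K : Type*) {E : Type*} [Field K] [Field E] [Algebra K E] (A : E[X]) :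
    Finset ℕ :=
  {i ∈ A.support | A.coeff i ∉ Submodule.span K (A.coeff '' Set.Iio i)}

lemma mem_pivots {i : ℕ} :
    i ∈ pivots K A ↔ A.coeff i ∉ Submodule.span K (A.coeff '' Set.Iio i) := by
  classical
  rw [pivots, Finset.mem_filter, mem_support_iff, and_iff_right_iff_imp]
  exact fun hi h₀ => hi (h₀ ▸ Submodule.zero_mem _)

lemma natTrailingDegree_mem_pivots (hA : A ≠ 0) : A.natTrailingDegree ∈ pivots K A := by
  have hspan : Submodule.span K (A.coeff '' Set.Iio A.natTrailingDegree) = ⊥ := by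
    rw [Submodule.span_eq_bot]
    rintro _ ⟨i, hi, rfl⟩
    exact coeff_eq_zero_of_lt_natTrailingDegree hi
  rw [mem_pivots, hspan, Submodule.mem_bot]
  exact trailingCoeff_nonzero_iff_nonzero.2 hA

lemma pivots_nonempty (hA : A ≠ 0) : (pivots K A).Nonempty :=
  ⟨_, natTrailingDegree_mem_pivots hA⟩

lemma coeff_mem_span_pivots_le (A : E[X]) (l : ℕ) :
    A.coeff l ∈ Submodule.span K (A.coeff '' {i | i ∈ pivots K A ∧ i ≤ l}) := by
  induction l using Nat.strong_induction_on with
  | _ l ih =>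
    by_cases hl : l ∈ pivots K A
    · exact Submodule.subset_span ⟨l, ⟨hl, le_rfl⟩, rfl⟩
    · refine Submodule.span_le.2 ?_ (not_not.1 (mem_pivots.not.1 hl))
      rintro _ ⟨i, hi, rfl⟩
      refine Submodule.span_mono (Set.image_mono ?_) (ih i hi)
      exact fun j hj => ⟨hj.1, hj.2.trans (Set.mem_Iio.1 hi).le⟩

lemma coeff_mem_span_pivots (A : E[X]) (l : ℕ) :
    A.coeff l ∈ Submodule.span K (A.coeff '' pivots K A) :=
  Submodule.span_mono (Set.image_mono fun _ hi => hi.1) (coeff_mem_span_pivots_le A l)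

lemma linearIndependent_coeff_pivots (A : E[X]) :
    LinearIndependent K fun i : pivots K A => A.coeff i := by
  classical
  rw [linearIndependent_iff']
  intro s g hg
  by_contra! hne
  obtain ⟨m, hm, hmax⟩ := Finset.exists_max_image {i ∈ s | g i ≠ 0} (fun i => (i : ℕ))
    (by simpa [Finset.filter_nonempty_iff] using hne)
  obtain ⟨hms, hgm⟩ := Finset.mem_filter.1 hm
  refine mem_pivots.1 m.2 ((Submodule.smul_mem_iff _ hgm).1 ?_)
  rw [← Finset.add_sum_erase _ _ hms] at hg
  rw [eq_neg_of_add_eq_zero_left hg]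
  refine Submodule.neg_mem _ (Submodule.sum_mem _ fun i hi => ?_)
  obtain ⟨him, his⟩ := Finset.mem_erase.1 hi
  by_cases hgi : g i = 0
  · simp [hgi]
  · have hle : (i : ℕ) ≤ m := hmax i (Finset.mem_filter.2 ⟨his, hgi⟩)
    exact Submodule.smul_mem _ _ (Submodule.subset_span
      ⟨i, hle.lt_of_ne (Subtype.coe_injective.ne him), rfl⟩)

lemma coeff_mul_mem_span_pivots_le (A B : E[X]) (i j : ℕ) :
    A.coeff i * B.coeff j ∈ Submodule.span K
      ((fun p : pivots K A × pivots K B => A.coeff p.1 * B.coeff p.2) ''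
        {p | (p.1 : ℕ) ≤ i ∧ (p.2 : ℕ) ≤ j}) := by
  have hmul := Submodule.mul_mem_mul (coeff_mem_span_pivots_le (K := K) A i)
    (coeff_mem_span_pivots_le (K := K) B j)
  rw [Submodule.span_mul_span] at hmul
  refine Submodule.span_mono ?_ hmul
  rintro _ ⟨_, ⟨u, ⟨hu, hui⟩, rfl⟩, _, ⟨v, ⟨hv, hvj⟩, rfl⟩, rfl⟩
  exact ⟨(⟨u, hu⟩, ⟨v, hv⟩), ⟨hui, hvj⟩, rfl⟩

lemma pivots_add_pivots_subset_support_mul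
    (hAB : LinearIndependent K fun p : pivots K A × pivots K B => A.coeff p.1 * B.coeff p.2) :
    pivots K A + pivots K B ⊆ (A * B).support := by
  refine Finset.add_subset_iff.2 fun i hi j hj => mem_support_iff.2 fun h₀ => ?_
  rw [coeff_mul, ← Finset.add_sum_erase _ _
    (Finset.HasAntidiagonal.mem_antidiagonal.2 rfl : (i, j) ∈ _)] at h₀
  refine hAB.notMem_span_image (s := {(⟨i, hi⟩, ⟨j, hj⟩)}ᶜ) (x := (⟨i, hi⟩, ⟨j, hj⟩))
    (by simp) ?_
  rw [eq_neg_of_add_eq_zero_left h₀]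
  refine Submodule.neg_mem _ (Submodule.sum_mem _ fun p hp => ?_)
  obtain ⟨hp_ne, hp⟩ := Finset.mem_erase.1 hp
  rw [Finset.HasAntidiagonal.mem_antidiagonal] at hp
  refine Submodule.span_mono (Set.image_mono ?_) (coeff_mul_mem_span_pivots_le A B p.1 p.2)
  rintro _ ⟨hle₁, hle₂⟩ rfl
  exact hp_ne (Prod.ext (by dsimp only at *; omega) (by dsimp only at *; omega))

lemma card_pivots_add_card_pivots_sub_one_le (hA : A ≠ 0) (hB : B ≠ 0)
    (hAB : LinearIndependent K fun p : pivots K A × pivots K B => A.coeff p.1 * B.coeff p.2) :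
    (pivots K A).card + (pivots K B).card - 1 ≤ (A * B).support.card :=
  (cauchy_davenport_add_of_linearOrder_isCancelAdd (pivots_nonempty hA) (pivots_nonempty hB)).trans
    (Finset.card_le_card (pivots_add_pivots_subset_support_mul hAB))

lemma coeff_mem_of_coeff_pivots_mem {R : Subalgebra K E} (hA : ∀ i ∈ pivots K A, A.coeff i ∈ R)
    (l : ℕ) : A.coeff l ∈ R := by
  refine Submodule.span_le (p := Subalgebra.toSubmodule R) |>.2 ?_ (coeff_mem_span_pivots A l)
  rintro _ ⟨i, hi, rfl⟩
  exact hA i hi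

lemma exists_eq_C_mul_map_of_card_pivots_le_one (hA : A ≠ 0) (hcard : (pivots K A).card ≤ 1) :
    ∃ q : K[X], A = C A.trailingCoeff * q.map (algebraMap K E) := by
  have hA₀ : A.trailingCoeff ≠ 0 := trailingCoeff_nonzero_iff_nonzero.2 hA
  have hpiv : pivots K A = {A.natTrailingDegree} :=
    Finset.eq_singleton_iff_unique_mem.2 ⟨natTrailingDegree_mem_pivots hA,
      fun j hj => Finset.card_le_one.1 hcard j hj _ (natTrailingDegree_mem_pivots hA)⟩
  have hlift : C A.trailingCoeff⁻¹ * A ∈ Polynomial.lifts (algebraMap K E) := by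
    rw [lifts_iff_coeff_lifts]
    intro l
    have hl := coeff_mem_span_pivots (K := K) A l
    rw [hpiv, Finset.coe_singleton, Set.image_singleton, Submodule.mem_span_singleton] at hl
    obtain ⟨r, hr⟩ := hl
    refine ⟨r, ?_⟩
    rw [coeff_C_mul, ← hr, Algebra.smul_def, mul_left_comm]
    change _ = _ * (A.trailingCoeff⁻¹ * A.trailingCoeff)
    rw [inv_mul_cancel₀ hA₀, mul_one]
  obtain ⟨q, hq⟩ := (mem_lifts _).1 hlift
  exact ⟨q, by rw [hq, ← mul_assoc, ← C_mul, mul_inv_cancel₀ hA₀, C_1, one_mul]⟩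

end Pivots

section ConjMirror

open Polynomial

lemma natTrailingDegree_map_of_injective {R S : Type*} [Semiring R] [Semiring S] {φ : R →+* S}
    (hφ : Function.Injective φ) (f : R[X]) :
    (f.map φ).natTrailingDegree = f.natTrailingDegree := by
  simp only [natTrailingDegree, trailingDegree, support_map_of_injective _ hφ]

lemma map_mirror_of_injective {R S : Type*} [Semiring R] [Semiring S] {φ : R →+* S}
    (hφ : Function.Injective φ) (f : R[X]) : f.mirror.map φ = (f.map φ).mirror := by
  ext i
  rw [coeff_map, coeff_mirror, coeff_mirror, coeff_map, natDegree_map_eq_of_injective hφ,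
    natTrailingDegree_map_of_injective hφ]

section CommRing

variable {R : Type*} [CommRing R] [StarRing R]

/-- The conjugate mirror image of a polynomial: conjugate the coefficients and reverse their order
between the trailing and the leading exponent. For a generating polynomial this is the conjugate
flip of the signal, placed on the same interval of exponents. -/
noncomputable def conjMirror (f : R[X]) : R[X] := (f.map (starRingEnd R)).mirror

lemma conjMirror_mul [IsDomain R] (f g : R[X]) :
    conjMirror (f * g) = conjMirror f * conjMirror g := by
  rw [conjMirror, Polynomial.map_mul, mirror_mul_of_domain, conjMirror, conjMirror]

lemma conjMirror_C (u : R) : conjMirror (C u) = C (starRingEnd R u) := by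
  rw [conjMirror, map_C, mirror_C]

lemma conjMirror_X_pow (m : ℕ) : conjMirror (X ^ m : R[X]) = X ^ m := by
  rw [conjMirror, Polynomial.map_pow, map_X, X_pow_eq_monomial, mirror_monomial]

lemma natDegree_conjMirror (f : R[X]) : (conjMirror f).natDegree = f.natDegree := by
  rw [conjMirror, mirror_natDegree, natDegree_map_eq_of_injective (star_injective (R := R))]

lemma coeff_conjMirror (f : R[X]) (i : ℕ) : (conjMirror f).coeff i =
    starRingEnd R (f.coeff (revAt (f.natDegree + f.natTrailingDegree) i)) := by
  rw [conjMirror, coeff_mirror, coeff_map, natDegree_map_eq_of_injective (star_injective (R := R)),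
    natTrailingDegree_map_of_injective (star_injective (R := R))]

lemma leadingCoeff_conjMirror (f : R[X]) :
    (conjMirror f).leadingCoeff = starRingEnd R f.trailingCoeff := by
  rw [conjMirror, mirror_leadingCoeff, trailingCoeff, coeff_map,
    natTrailingDegree_map_of_injective star_injective, trailingCoeff]

lemma conjMirror_conjMirror (f : R[X]) : conjMirror (conjMirror f) = f := by
  rw [conjMirror, conjMirror, map_mirror_of_injective (star_injective (R := R)), mirror_mirror]
  ext i
  simp

lemma conjMirror_ne_zero {f : R[X]} (hf : f ≠ 0) : conjMirror f ≠ 0 := by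
  rwa [conjMirror, Ne, mirror_eq_zero, Polynomial.map_eq_zero_iff (star_injective (R := R))]

end CommRing

section Field

variable {E : Type*} [Field E] [StarRing E] {f g : E[X]}

lemma exists_eq_C_mul_conjMirror_of_isCoprime (hf : f ≠ 0) (hfg : IsCoprime f g)
    (h : f * conjMirror f = g * conjMirror g) :
    ∃ u : E, u * starRingEnd E u = 1 ∧ g = C u * conjMirror f := by
  have hf' := conjMirror_ne_zero hf
  obtain ⟨q, hq⟩ : g ∣ conjMirror f := hfg.symm.dvd_of_dvd_mul_left ⟨_, h⟩
  have hg : g ≠ 0 := by rintro rfl; simp_all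
  have hfg' : f ∣ conjMirror g := hfg.dvd_of_dvd_mul_left ⟨_, h.symm⟩
  have hdeg : q.natDegree = 0 := by
    have hq_deg := congrArg natDegree hq
    have hle := natDegree_le_of_dvd hfg' (conjMirror_ne_zero hg)
    rw [natDegree_mul hg (by rintro rfl; simp_all), natDegree_conjMirror] at hq_deg
    rw [natDegree_conjMirror] at hle
    omega
  obtain ⟨v, rfl⟩ := natDegree_eq_zero.1 hdeg
  have hv : v ≠ 0 := by rintro rfl; simp_all
  have hgv : g = C v⁻¹ * conjMirror f := by
    rw [hq, mul_left_comm, ← C_mul, inv_mul_cancel₀ hv, C_1, mul_one]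
  refine ⟨v⁻¹, ?_, hgv⟩
  refine C_injective (mul_right_cancel₀ (mul_ne_zero hf hf') ?_)
  calc C (v⁻¹ * starRingEnd E v⁻¹) * (f * conjMirror f)
      = (C v⁻¹ * conjMirror f) * conjMirror (C v⁻¹ * conjMirror f) := by
        rw [conjMirror_mul, conjMirror_C, conjMirror_conjMirror, C_mul]; ring
    _ = C 1 * (f * conjMirror f) := by rw [← hgv, ← h, C_1, one_mul]

lemma exists_mul_eq_and_mul_conjMirror_eq (hf : f ≠ 0)
    (h : f * conjMirror f = g * conjMirror g) :
    ∃ (A B : E[X]) (u : E), u * starRingEnd E u = 1 ∧ A.trailingCoeff = 1 ∧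
      A * B = f ∧ C u * (A * conjMirror B) = g := by
  obtain ⟨a, b, D, hab, ha, hb⟩ := UniqueFactorizationMonoid.exists_reduced_factors f hf g
  have hD : D ≠ 0 := by rintro rfl; simp_all
  have ha₀ : a ≠ 0 := by rintro rfl; simp_all
  have hmul : a * conjMirror a = b * conjMirror b := by
    refine mul_left_cancel₀ (mul_ne_zero hD (conjMirror_ne_zero hD)) ?_
    rw [← ha, ← hb, conjMirror_mul, conjMirror_mul] at h
    linear_combination h
  obtain ⟨u, hu, rfl⟩ := exists_eq_C_mul_conjMirror_of_isCoprime ha₀ hab.isCoprime hmul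
  set δ := D.trailingCoeff
  have hδ : δ ≠ 0 := trailingCoeff_nonzero_iff_nonzero.2 hD
  have hδ' : starRingEnd E δ ≠ 0 := star_ne_zero.2 hδ
  have hC : C δ⁻¹ * C δ = (1 : E[X]) := by rw [← C_mul, inv_mul_cancel₀ hδ, C_1]
  refine ⟨C δ⁻¹ * D, C δ * a, u * (δ / starRingEnd E δ), ?_, ?_, ?_, ?_⟩
  · rw [map_mul, map_div₀, starRingEnd_self_apply]
    field_simp
    exact hu
  · rw [trailingCoeff_mul, ← monomial_zero_left, trailingCoeff,
      natTrailingDegree_monomial (inv_ne_zero hδ), coeff_monomial_same, inv_mul_cancel₀ hδ]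
  · rw [← ha]; linear_combination D * a * hC
  · have hC' : C (u * (δ / starRingEnd E δ)) * C δ⁻¹ * C (starRingEnd E δ) = C u := by
      rw [← C_mul, ← C_mul]; congr 1; field_simp
    rw [← hb, conjMirror_mul, conjMirror_C]
    linear_combination D * conjMirror a * hC'

lemma linearIndependent_starRingEnd_comp {K ι : Type*} [Field K] [Algebra K E]
    (hK : ∀ r : K, starRingEnd E (algebraMap K E r) ∈ Set.range (algebraMap K E)) {v : ι → E}
    (hv : LinearIndependent K v) : LinearIndependent K (starRingEnd E ∘ v) := by
  choose σ hσ using hK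
  refine hv.map_of_injective_injective σ (starRingEnd E).toAddMonoidHom (fun r hr => ?_)
    (fun m hm => (map_eq_zero (starRingEnd E)).1 hm) fun r m => ?_
  · have hr' := hσ r
    rw [hr, map_zero, eq_comm, map_eq_zero, map_eq_zero] at hr'
    exact hr'
  · simp [Algebra.smul_def, hσ]

lemma card_pivots_le_card_pivots_conjMirror {K : Type*} [Field K] [Algebra K E]
    (hK : ∀ r : K, starRingEnd E (algebraMap K E r) ∈ Set.range (algebraMap K E)) (f : E[X]) :
    (pivots K f).card ≤ (pivots K (conjMirror f)).card := by
  classical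
  set W : Finset E := (pivots K (conjMirror f)).image (conjMirror f).coeff
  have hspan : Set.range (starRingEnd E ∘ fun i : pivots K f => f.coeff i) ≤
      Submodule.span K (W : Set E) := by
    rintro _ ⟨i, rfl⟩
    have hi := coeff_mem_span_pivots (K := K) (conjMirror f)
      (revAt (f.natDegree + f.natTrailingDegree) i)
    rw [coeff_conjMirror, revAt_invol] at hi
    rwa [Finset.coe_image]
  have hcard : Fintype.card (pivots K f) ≤ Fintype.card W := linearIndependent_le_span_aux' _
    (linearIndependent_starRingEnd_comp hK (linearIndependent_coeff_pivots f)) _ hspan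
  rw [Fintype.card_coe, Fintype.card_coe] at hcard
  exact hcard.trans Finset.card_image_le

end Field

end ConjMirror

section SparsePoly

open Polynomial

/-- The polynomial with coefficients `c` at the exponents `e`: the generating polynomial of a signal
whose values `c` sit at the positions `e`. -/
noncomputable def sparsePoly {R ι : Type*} [Semiring R] [Fintype ι] (c : ι → R) (e : ι → ℕ) :
    R[X] :=
  ∑ s, C (c s) * X ^ e s

variable {R ι : Type*} [Fintype ι] {e : ι → ℕ}

lemma coeff_sparsePoly [Semiring R] (c : ι → R) (e : ι → ℕ) (l : ℕ) :
    (sparsePoly c e).coeff l = ∑ s, if l = e s then c s else 0 := by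
  simp [sparsePoly, finsetSum_coeff, coeff_C_mul, coeff_X_pow]

lemma coeff_sparsePoly_apply [Semiring R] (he : Function.Injective e) (c : ι → R) (s : ι) :
    (sparsePoly c e).coeff (e s) = c s := by
  classical
  simp [coeff_sparsePoly, he.eq_iff]

lemma support_sparsePoly_subset [Semiring R] (c : ι → R) (e : ι → ℕ) :
    (sparsePoly c e).support ⊆ Finset.univ.image e := by
  intro l hl
  rw [mem_support_iff, coeff_sparsePoly] at hl
  obtain ⟨s, -, hs⟩ := Finset.exists_ne_zero_of_sum_ne_zero hl
  exact Finset.mem_image.2 ⟨s, Finset.mem_univ s, (ite_ne_right_iff.1 hs).1.symm⟩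

lemma card_support_sparsePoly_le [Semiring R] (c : ι → R) (e : ι → ℕ) :
    (sparsePoly c e).support.card ≤ {s | c s ≠ 0}.ncard := by
  refine le_trans ?_ (Set.ncard_image_le (f := e) (Set.toFinite _))
  rw [← Set.ncard_coe_finset]
  refine Set.ncard_le_ncard (fun l hl => ?_) (Set.toFinite _)
  rw [Finset.mem_coe, mem_support_iff, coeff_sparsePoly] at hl
  obtain ⟨s, -, hs⟩ := Finset.exists_ne_zero_of_sum_ne_zero hl
  rw [ite_ne_right_iff] at hs
  exact ⟨s, hs.2, hs.1.symm⟩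

lemma X_pow_mul_sparsePoly [CommSemiring R] (c : ι → R) (e : ι → ℕ) (m : ℕ) :
    X ^ m * sparsePoly c e = sparsePoly c fun s => e s + m := by
  simp only [sparsePoly, Finset.mul_sum, pow_add, ← mul_assoc, mul_comm]

lemma sparsePoly_ne_zero [Semiring R] (he : Function.Injective e) {c : ι → R} {s : ι}
    (hs : c s ≠ 0) : sparsePoly c e ≠ 0 := by
  intro h
  rw [← coeff_sparsePoly_apply he c s, h, coeff_zero] at hs
  exact hs rfl

lemma map_sparsePoly [Semiring R] {S : Type*} [Semiring S] (φ : R →+* S) (c : ι → R) (e : ι → ℕ) :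
    (sparsePoly c e).map φ = sparsePoly (φ ∘ c) e := by
  simp [sparsePoly, Polynomial.map_sum]

lemma coeff_sparsePoly_mem_adjoin [CommRing R] {K : Type*} [CommRing K] [Algebra K R]
    (c : ι → R) (e : ι → ℕ) (l : ℕ) :
    (sparsePoly c e).coeff l ∈ Algebra.adjoin K (Set.range c) := by
  rw [coeff_sparsePoly]
  refine Subalgebra.sum_mem _ fun s _ => ?_
  split_ifs
  · exact Algebra.subset_adjoin ⟨s, rfl⟩
  · exact Subalgebra.zero_mem _

lemma eq_zero_of_eval_sparsePoly_eq_zero {K E : Type*} [Field K] [Field E] [Algebra K E]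
    [Nonempty ι] {c : ι → E} (hc : LinearIndependent K c) {r : K}
    (hr : (sparsePoly c e).eval (algebraMap K E r) = 0) : r = 0 := by
  refine eq_zero_of_pow_eq_zero (n := e (Classical.arbitrary ι)) ?_
  refine Fintype.linearIndependent_iff.1 hc (fun s => r ^ e s) ?_ _
  rw [← hr, sparsePoly, eval_finsetSum]
  exact Finset.sum_congr rfl fun s _ => by simp [Algebra.smul_def, mul_comm (c s)]

lemma eq_C_mul_X_pow_of_roots_eq_zero {K : Type*} [Field K] [IsAlgClosed K] {q : K[X]}
    (hq : ∀ r ∈ q.roots, r = 0) : q = C q.leadingCoeff * X ^ q.roots.card := by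
  conv_lhs => rw [(IsAlgClosed.splits q).eq_prod_roots, Multiset.eq_replicate_card.2 hq]
  simp

lemma eq_C_mul_X_pow_of_dvd_sparsePoly {K E : Type*} [Field K] [IsAlgClosed K] [Field E]
    [Algebra K E] [Nonempty ι] {c : ι → E} (hc : LinearIndependent K c) {A : E[X]} (hA₀ : A ≠ 0)
    (hA : A ∣ sparsePoly c e) (hcard : (pivots K A).card ≤ 1) :
    ∃ (b : E) (m : ℕ), A = C b * X ^ m := by
  obtain ⟨q, hq⟩ := exists_eq_C_mul_map_of_card_pivots_le_one hA₀ hcard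
  have hroots (r : K) (hr : r ∈ q.roots) : r = 0 := by
    refine eq_zero_of_eval_sparsePoly_eq_zero hc (e := e)
      (eval_eq_zero_of_dvd_of_eval_eq_zero hA ?_)
    rw [hq, eval_mul, eval_map_algebraMap, aeval_algebraMap_apply_eq_algebraMap_eval,
      isRoot_of_mem_roots hr, map_zero, mul_zero]
  rw [eq_C_mul_X_pow_of_roots_eq_zero hroots, Polynomial.map_mul, map_C, Polynomial.map_pow, map_X,
    ← mul_assoc, ← C_mul] at hq
  exact ⟨_, _, hq⟩

end SparsePoly

section Coefficients

open Polynomial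

lemma isIntegral_coeff_div_leadingCoeff_of_dvd {F E : Type*} [Field F] [Field E] [Algebra F E]
    {f : F[X]} (hf : f ≠ 0) {A : E[X]} (hA : A ∣ f.map (algebraMap F E)) (l : ℕ) :
    IsIntegral F (A.coeff l / A.leadingCoeff) := by
  have hA₀ : A ≠ 0 := ne_zero_of_dvd_ne_zero
    ((Polynomial.map_ne_zero_iff (algebraMap F E).injective).2 hf) hA
  have hdvd : A * C A.leadingCoeff⁻¹ ∣ (f * C f.leadingCoeff⁻¹).map (algebraMap F E) := by
    rw [(isUnit_C.2 (inv_ne_zero (leadingCoeff_ne_zero.2 hA₀)).isUnit).mul_right_dvd,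
      Polynomial.map_mul]
    exact hA.mul_right _
  simpa [div_eq_mul_inv] using isIntegral_coeff_of_dvd _ _ (monic_mul_leadingCoeff_inv hf)
    (monic_mul_leadingCoeff_inv hA₀) hdvd l

lemma isAlgebraic_coeff_of_dvd {R E : Type*} [CommRing R] [IsDomain R] [Field E] [Algebra R E]
    [FaithfulSMul R E] {f A : E[X]} (hf₀ : f ≠ 0) (hf : ∀ l, f.coeff l ∈ Set.range (algebraMap R E))
    (hA : A ∣ f) {m : ℕ} (hm₀ : A.coeff m ≠ 0) (hm : IsAlgebraic R (A.coeff m)) (l : ℕ) :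
    IsAlgebraic R (A.coeff l) := by
  let F := FractionRing R
  let _ := FractionRing.liftAlgebra R E
  obtain ⟨p, rfl⟩ : ∃ p : R[X], p.map (algebraMap R E) = f :=
    (mem_lifts f).1 ((lifts_iff_coeff_lifts f).2 hf)
  have hA₀ : A.leadingCoeff ≠ 0 := leadingCoeff_ne_zero.2 (ne_zero_of_dvd_ne_zero hf₀ hA)
  rw [IsScalarTower.algebraMap_eq R F E, ← Polynomial.map_map] at hf₀ hA
  have hp₀ : p.map (algebraMap R F) ≠ 0 := fun h => hf₀ (by rw [h, Polynomial.map_zero])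
  have hquot (i : ℕ) : IsAlgebraic F (A.coeff i / A.leadingCoeff) :=
    (isIntegral_coeff_div_leadingCoeff_of_dvd hp₀ hA i).isAlgebraic
  rw [IsFractionRing.isAlgebraic_iff R F E] at hm ⊢
  have hl : A.coeff l =
      A.coeff m * (A.coeff l / A.leadingCoeff) / (A.coeff m / A.leadingCoeff) := by
    field_simp
  rw [hl, div_eq_mul_inv]
  exact (hm.mul (hquot l)).mul (hquot m).inv

end Coefficients

section Core

open Polynomial
open scoped Pointwise

variable {K E ι : Type*} [Field K] [Field E] [Algebra K E] [Fintype ι] {c : ι → E} {e : ι → ℕ}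
  {A B : E[X]}

variable (K) in
/-- The pivot coefficients of `A` and `B`, except for the trailing coefficient of `A`. When the
latter is normalised to `1` they determine `A * B` over `K`. -/
def factorCoords (A B : E[X]) : ↥((pivots K A).erase A.natTrailingDegree) ⊕ ↥(pivots K B) → E :=
  Sum.elim (fun i => A.coeff i) fun j => B.coeff j

lemma card_factorCoords_index (hA : A ≠ 0) :
    Fintype.card (↥((pivots K A).erase A.natTrailingDegree) ⊕ ↥(pivots K B)) =
      (pivots K A).card + (pivots K B).card - 1 := by
  have hpos := (pivots_nonempty (K := K) hA).card_pos
  rw [Fintype.card_sum, Fintype.card_coe, Fintype.card_coe,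
    Finset.card_erase_of_mem (natTrailingDegree_mem_pivots hA)]
  omega

lemma coeff_left_mem_adjoin_factorCoords (hA : A.trailingCoeff = 1) (l : ℕ) :
    A.coeff l ∈ Algebra.adjoin K (Set.range (factorCoords K A B ∘ Sum.inl)) := by
  refine coeff_mem_of_coeff_pivots_mem (fun i hi => ?_) l
  by_cases hi' : i = A.natTrailingDegree
  · rw [hi', ← trailingCoeff, hA]
    exact Subalgebra.one_mem _
  · exact Algebra.subset_adjoin ⟨⟨i, Finset.mem_erase.2 ⟨hi', hi⟩⟩, rfl⟩

lemma coeff_right_mem_adjoin_factorCoords (l : ℕ) :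
    B.coeff l ∈ Algebra.adjoin K (Set.range (factorCoords K A B ∘ Sum.inr)) := by
  refine coeff_mem_of_coeff_pivots_mem (fun j hj => ?_) l
  exact Algebra.subset_adjoin ⟨⟨j, hj⟩, rfl⟩

lemma coeff_mul_mem_adjoin_factorCoords (hA : A.trailingCoeff = 1) (l : ℕ) :
    (A * B).coeff l ∈ Algebra.adjoin K (Set.range (factorCoords K A B)) := by
  rw [coeff_mul]
  exact Subalgebra.sum_mem _ fun p _ => Subalgebra.mul_mem _
    (Algebra.adjoin_mono (Set.range_comp_subset_range _ _)
      (coeff_left_mem_adjoin_factorCoords hA _))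
    (Algebra.adjoin_mono (Set.range_comp_subset_range _ _)
      (coeff_right_mem_adjoin_factorCoords _))

lemma isAlgebraic_adjoin_of_mem {s : Set E} {x : E} (hx : x ∈ Algebra.adjoin K s) :
    IsAlgebraic (Algebra.adjoin K s) x :=
  isAlgebraic_algebraMap (⟨x, hx⟩ : Algebra.adjoin K s)

lemma isAlgebraic_adjoin_factorCoords (he : Function.Injective e) (hA : A.trailingCoeff = 1)
    (hAB : A * B = sparsePoly c e) (s : ι) :
    IsAlgebraic (Algebra.adjoin K (Set.range (factorCoords K A B))) (c s) := by
  rw [← coeff_sparsePoly_apply he c s, ← hAB]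
  exact isAlgebraic_adjoin_of_mem (coeff_mul_mem_adjoin_factorCoords hA (e s))

lemma linearIndependent_coeff_mul_coeff_of_factorCoords [IsAlgClosed K] (hA : A.trailingCoeff = 1)
    (h : AlgebraicIndependent K (factorCoords K A B)) :
    LinearIndependent K fun p : pivots K A × pivots K B => A.coeff p.1 * B.coeff p.2 := by
  rw [← Sum.elim_comp_inl_inr (factorCoords K A B)] at h
  exact linearIndependent_mul_of_isAlgebraic_adjoin (a := fun i : pivots K A => A.coeff i)
    (b := fun j : pivots K B => B.coeff j) h (linearIndependent_coeff_pivots A)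
    (fun i => isAlgebraic_adjoin_of_mem (coeff_left_mem_adjoin_factorCoords hA i))
    (linearIndependent_coeff_pivots B)
    (fun j => isAlgebraic_adjoin_of_mem (coeff_right_mem_adjoin_factorCoords j))

lemma pivots_add_pivots_eq_image_of_mul_eq_sparsePoly [IsAlgClosed K] (he : Function.Injective e)
    (hc : AlgebraicIndependent K c) (hA : A.trailingCoeff = 1) (hB : B ≠ 0)
    (hAB : A * B = sparsePoly c e)
    (hcard : (pivots K A).card + (pivots K B).card - 1 ≤ Fintype.card ι) :
    pivots K A + pivots K B = Finset.univ.image e ∧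
      (pivots K A + pivots K B).card ≤ (pivots K A).card + (pivots K B).card - 1 := by
  have hA₀ : A ≠ 0 := by rintro rfl; simp at hA
  have hcι : (Finset.univ.image e).card = Fintype.card ι := Finset.card_image_of_injective _ he
  rw [← card_factorCoords_index hA₀] at hcard ⊢
  have halg := isAlgebraic_adjoin_factorCoords (K := K) he hA hAB
  have hcard' := card_le_card_of_isAlgebraic_adjoin_range hc halg
  have hsub : pivots K A + pivots K B ⊆ Finset.univ.image e := by
    refine (pivots_add_pivots_subset_support_mul (linearIndependent_coeff_mul_coeff_of_factorCoords
      hA (algebraicIndependent_of_isAlgebraic_adjoin_range hc halg hcard))).trans ?_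
    rw [hAB]
    exact support_sparsePoly_subset c e
  have hle : Fintype.card ι ≤ (pivots K A + pivots K B).card := by
    rw [card_factorCoords_index hA₀] at hcard'
    exact hcard'.trans
      (cauchy_davenport_add_of_linearOrder_isCancelAdd (pivots_nonempty hA₀) (pivots_nonempty hB))
  have heq := Finset.eq_of_subset_of_card_le hsub (hcι.trans_le hle)
  exact ⟨heq, by rw [heq, hcι]; exact hcard'⟩

lemma isAlgebraic_coeff_of_mul_eq_sparsePoly [Nonempty ι] (he : Function.Injective e)
    (hc : AlgebraicIndependent K c) (hA : A.trailingCoeff = 1) (hAB : A * B = sparsePoly c e)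
    (l : ℕ) : IsAlgebraic (Algebra.adjoin K (Set.range c)) (A.coeff l) := by
  refine isAlgebraic_coeff_of_dvd (m := A.natTrailingDegree)
    (sparsePoly_ne_zero he (hc.ne_zero (Classical.arbitrary ι)))
    (fun l => ⟨⟨_, coeff_sparsePoly_mem_adjoin c e l⟩, rfl⟩) ⟨B, hAB.symm⟩ ?_ ?_ l
  · rw [← trailingCoeff, hA]
    exact one_ne_zero
  · rw [← trailingCoeff, hA]
    exact isAlgebraic_one

variable [StarRing E]

lemma coeff_conjMirror_sparsePoly_mem_adjoin (c : ι → E) (e : ι → ℕ) (l : ℕ) :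
    (conjMirror (sparsePoly c e)).coeff l ∈ Algebra.adjoin K (Set.range (star c)) := by
  rw [coeff_conjMirror, ← coeff_map, map_sparsePoly]
  exact coeff_sparsePoly_mem_adjoin _ e _

lemma isAlgebraic_coeff_conjMirror_of_mul_eq_sparsePoly [Nonempty ι] (he : Function.Injective e)
    (hc : AlgebraicIndependent K c) (hA : A.trailingCoeff = 1) (hAB : A * B = sparsePoly c e)
    (l : ℕ) : IsAlgebraic (Algebra.adjoin K (Set.range (star c))) ((conjMirror B).coeff l) := by
  have hf : conjMirror A * conjMirror B = conjMirror (sparsePoly c e) := by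
    rw [← conjMirror_mul, hAB]
  have hf₀ : conjMirror (sparsePoly c e) ≠ 0 :=
    conjMirror_ne_zero (sparsePoly_ne_zero he (hc.ne_zero (Classical.arbitrary ι)))
  have hlead : (conjMirror B).leadingCoeff = (conjMirror (sparsePoly c e)).leadingCoeff := by
    rw [← hf, leadingCoeff_mul, leadingCoeff_conjMirror A, hA, map_one, one_mul]
  refine isAlgebraic_coeff_of_dvd (m := (conjMirror B).natDegree) hf₀
    (fun l => ⟨⟨_, coeff_conjMirror_sparsePoly_mem_adjoin c e l⟩, rfl⟩)
    ⟨conjMirror A, by rw [← hf, mul_comm]⟩ ?_ ?_ l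
  · rw [coeff_natDegree, hlead]
    exact leadingCoeff_ne_zero.2 hf₀
  · rw [coeff_natDegree, hlead]
    exact isAlgebraic_adjoin_of_mem (coeff_conjMirror_sparsePoly_mem_adjoin c e _)

lemma linearIndependent_coeff_mul_coeff_conjMirror [IsAlgClosed K] [Nonempty ι]
    (he : Function.Injective e) (hgen : AlgebraicIndependent K (Sum.elim c (star c)))
    (hA : A.trailingCoeff = 1) (hAB : A * B = sparsePoly c e) :
    LinearIndependent K fun p : pivots K A × pivots K (conjMirror B) =>
      A.coeff p.1 * (conjMirror B).coeff p.2 := by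
  have hc : AlgebraicIndependent K c := hgen.comp Sum.inl Sum.inl_injective
  exact linearIndependent_mul_of_isAlgebraic_adjoin (a := fun i : pivots K A => A.coeff i)
    (b := fun j : pivots K (conjMirror B) => (conjMirror B).coeff j) hgen
    (linearIndependent_coeff_pivots A)
    (fun i => isAlgebraic_coeff_of_mul_eq_sparsePoly he hc hA hAB i)
    (linearIndependent_coeff_pivots (conjMirror B))
    (fun j => isAlgebraic_coeff_conjMirror_of_mul_eq_sparsePoly he hc hA hAB j)

lemma exists_conjMirror_eq_C_mul_of_card_pivots_le_one [IsAlgClosed K] [Nonempty ι]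
    (hc : LinearIndependent K c) (hA₀ : A ≠ 0) (hA : A ∣ sparsePoly c e)
    (hcard : (pivots K A).card ≤ 1) :
    ∃ v : E, v * starRingEnd E v = 1 ∧ conjMirror A = C v * A := by
  obtain ⟨b, m, rfl⟩ := eq_C_mul_X_pow_of_dvd_sparsePoly hc hA₀ hA hcard
  have hb : b ≠ 0 := by rintro rfl; simp at hA₀
  have hb' : starRingEnd E b ≠ 0 := star_ne_zero.2 hb
  refine ⟨starRingEnd E b / b, ?_, ?_⟩
  · rw [map_div₀, starRingEnd_self_apply]
    field_simp
  · rw [conjMirror_mul, conjMirror_C, conjMirror_X_pow, ← mul_assoc, ← C_mul, div_mul_cancel₀ _ hb]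

lemma card_pivots_le_one_or_card_pivots_le_one [IsAlgClosed K] [Nonempty ι]
    (hK : ∀ r : K, starRingEnd E (algebraMap K E r) ∈ Set.range (algebraMap K E))
    (he : Function.Injective e) (hgen : AlgebraicIndependent K (Sum.elim c (star c)))
    (hap : ¬ IsArithProg (Finset.univ.image e)) (hA : A.trailingCoeff = 1) (hB : B ≠ 0)
    (hAB : A * B = sparsePoly c e)
    (hsupp : (A * conjMirror B).support.card ≤ Fintype.card ι) :
    (pivots K A).card ≤ 1 ∨ (pivots K B).card ≤ 1 := by
  have hA₀ : A ≠ 0 := by rintro rfl; simp at hA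
  have hcard : (pivots K A).card + (pivots K B).card - 1 ≤ Fintype.card ι := by
    have hle := card_pivots_add_card_pivots_sub_one_le hA₀ (conjMirror_ne_zero hB)
      (linearIndependent_coeff_mul_coeff_conjMirror he hgen hA hAB)
    have hle' := card_pivots_le_card_pivots_conjMirror hK B
    omega
  obtain ⟨hsum, hsum_card⟩ := pivots_add_pivots_eq_image_of_mul_eq_sparsePoly he
    (hgen.comp Sum.inl Sum.inl_injective) hA hB hAB hcard
  by_contra! hlt
  exact hap (hsum ▸ isArithProg_add_of_card_add_le hlt.1 hlt.2 hsum_card)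

theorem eq_C_mul_or_eq_C_mul_conjMirror_of_mul_conjMirror_eq [IsAlgClosed K] [Nonempty ι]
    (hK : ∀ r : K, starRingEnd E (algebraMap K E r) ∈ Set.range (algebraMap K E))
    (he : Function.Injective e) (hgen : AlgebraicIndependent K (Sum.elim c (star c)))
    (hap : ¬ IsArithProg (Finset.univ.image e)) {g : E[X]} (hg : g.support.card ≤ Fintype.card ι)
    (h : sparsePoly c e * conjMirror (sparsePoly c e) = g * conjMirror g) :
    ∃ u : E, u * starRingEnd E u = 1 ∧
      (g = C u * sparsePoly c e ∨ g = C u * conjMirror (sparsePoly c e)) := by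
  have hc : AlgebraicIndependent K c := hgen.comp Sum.inl Sum.inl_injective
  have hf₀ : sparsePoly c e ≠ 0 := sparsePoly_ne_zero he (hc.ne_zero (Classical.arbitrary ι))
  obtain ⟨A, B, u, hu, hA, hAB, rfl⟩ := exists_mul_eq_and_mul_conjMirror_eq hf₀ h
  have hA₀ : A ≠ 0 := by rintro rfl; simp at hA
  have hB₀ : B ≠ 0 := by rintro rfl; simp [← hAB] at hf₀
  have hsupp : (C u * (A * conjMirror B)).support = (A * conjMirror B).support := by
    have hu₀ : u ≠ 0 := left_ne_zero_of_mul_eq_one hu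
    ext l
    simp only [mem_support_iff, coeff_C_mul, mul_ne_zero_iff, hu₀, ne_eq, not_false_iff, true_and]
  rw [hsupp] at hg
  obtain hA₁ | hB₁ := card_pivots_le_one_or_card_pivots_le_one hK he hgen hap hA hB₀ hAB hg
  · obtain ⟨v, hv, hAv⟩ := exists_conjMirror_eq_C_mul_of_card_pivots_le_one hc.linearIndependent hA₀
      ⟨B, hAB.symm⟩ hA₁
    have hCv : C v * C (starRingEnd E v) = (1 : E[X]) := by rw [← C_mul, hv, C_1]
    refine ⟨u * starRingEnd E v, ?_, .inr ?_⟩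
    · rw [map_mul, starRingEnd_self_apply]
      linear_combination v * starRingEnd E v * hu + hv
    · rw [← hAB, conjMirror_mul, hAv, C_mul]
      linear_combination -C u * A * conjMirror B * hCv
  · obtain ⟨v, hv, hBv⟩ := exists_conjMirror_eq_C_mul_of_card_pivots_le_one hc.linearIndependent
      hB₀ ⟨A, by rw [mul_comm, hAB]⟩ hB₁
    refine ⟨u * v, ?_, .inl ?_⟩
    · rw [map_mul]
      linear_combination v * starRingEnd E v * hu + hv
    · rw [← hAB, hBv, C_mul]
      ring

end Core

section LaurentAutocorrelation

open Polynomial LaurentPolynomial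

lemma laurent_coeff_C_mul_T {R : Type*} [Semiring R] (a : R) (m j : ℤ) :
    (LaurentPolynomial.C a * T m).coeff j = if m = j then a else 0 := by
  rw [← single_eq_C_mul_T, AddMonoidAlgebra.coeff_single, Finsupp.single_apply]

lemma laurent_coeff_mul_T {R : Type*} [Semiring R] (f : R[T;T⁻¹]) (m j : ℤ) :
    (f * T m).coeff j = f.coeff (j - m) := by
  rw [T, AddMonoidAlgebra.coeff_mul_single_eq_coeff_mul (j - m) fun _ _ => by omega, mul_one]

lemma laurent_coeff_C_mul {R : Type*} [Semiring R] (u : R) (f : R[T;T⁻¹]) (j : ℤ) :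
    (LaurentPolynomial.C u * f).coeff j = u * f.coeff j := by
  rw [← LaurentPolynomial.smul_eq_C_mul, AddMonoidAlgebra.coeff_smul, Finsupp.smul_apply,
    smul_eq_mul]

variable {E : Type*} [Field E] [StarRing E] {p q : E[X]}

/-- The autocorrelation of `p` as a Laurent polynomial: `p(T)` times the conjugate of `p` evaluated
at `T⁻¹`. For the generating polynomial of a signal, the autocorrelation of the signal is read off
at the nonpositive exponents. -/
noncomputable def laurentAutocorr (p : E[X]) : E[T;T⁻¹] :=
  toLaurent p * invert (toLaurent (p.map (starRingEnd E)))

lemma toLaurent_conjMirror (p : E[X]) : toLaurent (conjMirror p) =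
    invert (toLaurent (p.map (starRingEnd E))) * T (p.natDegree + p.natTrailingDegree) := by
  rw [conjMirror, mirror, map_mul, toLaurent_reverse, toLaurent_X_pow, mul_T_assoc,
    natDegree_map, natTrailingDegree_map_of_injective star_injective]

lemma toLaurent_mul_conjMirror (p : E[X]) : toLaurent (p * conjMirror p) =
    laurentAutocorr p * T (p.natDegree + p.natTrailingDegree) := by
  rw [map_mul, toLaurent_conjMirror, laurentAutocorr, mul_assoc]

lemma laurentAutocorr_eq_zero : laurentAutocorr p = 0 ↔ p = 0 := by
  have h := toLaurent_eq_zero (f := p * conjMirror p)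
  rw [toLaurent_mul_conjMirror, (isUnit_T _).mul_left_eq_zero] at h
  rw [h, mul_eq_zero, or_iff_left_of_imp fun hp => ?_]
  by_contra hp'
  exact conjMirror_ne_zero hp' hp

lemma mul_conjMirror_mul_X_pow_eq (h : laurentAutocorr p = laurentAutocorr q) :
    p * conjMirror p * X ^ (q.natDegree + q.natTrailingDegree) =
      q * conjMirror q * X ^ (p.natDegree + p.natTrailingDegree) := by
  refine toLaurent_injective ?_
  rw [map_mul, map_mul _ (q * _), toLaurent_mul_conjMirror, toLaurent_mul_conjMirror,
    toLaurent_X_pow, toLaurent_X_pow, mul_T_assoc, mul_T_assoc, h]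
  push_cast
  rw [add_comm]

lemma natDegree_add_natTrailingDegree_eq (hp : p ≠ 0) (h : laurentAutocorr p = laurentAutocorr q) :
    p.natDegree + q.natTrailingDegree = q.natDegree + p.natTrailingDegree := by
  have hq : q ≠ 0 := by rwa [Ne, ← laurentAutocorr_eq_zero, ← h, laurentAutocorr_eq_zero]
  have hdeg := congrArg natDegree (mul_conjMirror_mul_X_pow_eq h)
  rw [natDegree_mul_X_pow _ (mul_ne_zero hp (conjMirror_ne_zero hp)),
    natDegree_mul_X_pow _ (mul_ne_zero hq (conjMirror_ne_zero hq)),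
    natDegree_mul hp (conjMirror_ne_zero hp), natDegree_mul hq (conjMirror_ne_zero hq),
    natDegree_conjMirror, natDegree_conjMirror] at hdeg
  omega

lemma X_pow_mul_mul_conjMirror_eq (hp : p ≠ 0) (h : laurentAutocorr p = laurentAutocorr q) :
    X ^ q.natTrailingDegree * p * conjMirror (X ^ q.natTrailingDegree * p) =
      X ^ p.natTrailingDegree * q * conjMirror (X ^ p.natTrailingDegree * q) := by
  have hdeg := natDegree_add_natTrailingDegree_eq hp h
  have hle := q.natTrailingDegree_le_natDegree
  have hp_exp : p.natDegree + p.natTrailingDegree =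
      q.natDegree - q.natTrailingDegree + 2 * p.natTrailingDegree := by omega
  have hq_exp : q.natDegree + q.natTrailingDegree =
      q.natDegree - q.natTrailingDegree + 2 * q.natTrailingDegree := by omega
  have hmul := mul_conjMirror_mul_X_pow_eq h
  rw [hp_exp, hq_exp, pow_add, pow_add] at hmul
  refine mul_left_cancel₀ (pow_ne_zero (q.natDegree - q.natTrailingDegree) X_ne_zero) ?_
  rw [conjMirror_mul, conjMirror_mul, conjMirror_X_pow, conjMirror_X_pow]
  linear_combination hmul

lemma toLaurent_sparsePoly {R ι : Type*} [Semiring R] [Fintype ι] (c : ι → R) (e : ι → ℕ) :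
    toLaurent (sparsePoly c e) = ∑ s, LaurentPolynomial.C (c s) * T (e s) := by
  simp only [sparsePoly, map_sum, toLaurent_C_mul_X_pow]

lemma laurentAutocorr_sparsePoly {ι : Type*} [Fintype ι] (c : ι → E) (e : ι → ℕ) :
    laurentAutocorr (sparsePoly c e) =
      ∑ s, ∑ t, LaurentPolynomial.C (c s * starRingEnd E (c t)) * T (e s - e t) := by
  simp only [laurentAutocorr, map_sparsePoly, toLaurent_sparsePoly, map_sum, map_mul, invert_C,
    invert_T, Finset.sum_mul_sum, T_sub, Function.comp_apply]
  exact Finset.sum_congr rfl fun s _ => Finset.sum_congr rfl fun t _ => mul_mul_mul_comm ..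

lemma coeff_laurentAutocorr_sparsePoly {ι : Type*} [Fintype ι] (c : ι → E) (e : ι → ℕ) (m : ℤ) :
    (laurentAutocorr (sparsePoly c e)).coeff m =
      ∑ s, ∑ t, if (e s - e t : ℤ) = m then c s * starRingEnd E (c t) else 0 := by
  simp only [laurentAutocorr_sparsePoly, AddMonoidAlgebra.coeff_sum, Finsupp.finsetSum_apply,
    laurent_coeff_C_mul_T]

lemma coeff_laurentAutocorr_sparsePoly_neg {ι : Type*} [Fintype ι] (c : ι → E) (e : ι → ℕ)
    (m : ℤ) : (laurentAutocorr (sparsePoly c e)).coeff (-m) =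
      starRingEnd E ((laurentAutocorr (sparsePoly c e)).coeff m) := by
  simp only [coeff_laurentAutocorr_sparsePoly, map_sum, apply_ite (starRingEnd E), map_mul,
    map_zero, starRingEnd_self_apply]
  rw [Finset.sum_comm]
  refine Finset.sum_congr rfl fun s _ => Finset.sum_congr rfl fun t _ => ?_
  simp only [mul_comm (c t), ← neg_sub (e s : ℤ) (e t), neg_inj]

end LaurentAutocorrelation

section Signals

open Polynomial LaurentPolynomial

variable {n : ℕ}

lemma extZ_val (x : Fin n → ℂ) (i : Fin n) : extZ x i = x i :=
  dif_pos ⟨by omega, by omega⟩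

lemma extZ_eq_zero (x : Fin n → ℂ) {j : ℤ} (hj : n ≤ j) : extZ x j = 0 :=
  dif_neg fun h => by omega

lemma sum_ite_eq_extZ (x : Fin n → ℂ) (j : ℤ) :
    ∑ i : Fin n, (if (i : ℤ) = j then x i else 0) = extZ x j := by
  rw [extZ]
  split_ifs with hj
  · rw [Finset.sum_eq_single_of_mem ⟨j.toNat, by omega⟩ (Finset.mem_univ _)]
    · exact if_pos (Int.toNat_of_nonneg hj.1)
    · exact fun i _ hi => if_neg fun hij => hi (Fin.ext (by simp [← hij]))
  · exact Finset.sum_eq_zero fun i _ => if_neg (by omega)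

/-- The generating polynomial of the signal `x`. -/
noncomputable abbrev sigPoly (x : Fin n → ℂ) : ℂ[X] := sparsePoly x Fin.val

lemma coeff_toLaurent_sigPoly (x : Fin n → ℂ) (j : ℤ) :
    (toLaurent (sigPoly x)).coeff j = extZ x j := by
  simp only [toLaurent_sparsePoly, AddMonoidAlgebra.coeff_sum, Finsupp.finsetSum_apply,
    laurent_coeff_C_mul_T, sum_ite_eq_extZ]

lemma coeff_invert_toLaurent_map_sigPoly (x : Fin n → ℂ) (j : ℤ) :
    (invert (toLaurent ((sigPoly x).map (starRingEnd ℂ)))).coeff j =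
      starRingEnd ℂ (extZ x (-j)) := by
  rw [invert_apply, map_sparsePoly, ← sum_ite_eq_extZ, map_sum]
  simp only [toLaurent_sparsePoly, AddMonoidAlgebra.coeff_sum, Finsupp.finsetSum_apply,
    laurent_coeff_C_mul_T, apply_ite (starRingEnd ℂ), map_zero, Function.comp_apply]

lemma coeff_laurentAutocorr_sigPoly_neg (x : Fin n → ℂ) (m : ℕ) :
    (laurentAutocorr (sigPoly x)).coeff (-m) = autocorr x m := by
  have hsum (i : Fin n) : (∑ j : Fin n, if (i - j : ℤ) = -m then x i * starRingEnd ℂ (x j) else 0) =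
      extZ x i * starRingEnd ℂ (extZ x (i + m)) := by
    have hij (j : Fin n) : (i - j : ℤ) = -m ↔ (j : ℤ) = i + m := by omega
    simp only [← sum_ite_eq_extZ x (i + m), map_sum, Finset.mul_sum, extZ_val, hij,
      apply_ite (starRingEnd ℂ), map_zero, mul_ite, mul_zero]
  rw [coeff_laurentAutocorr_sparsePoly, Finset.sum_congr rfl fun i _ => hsum i, autocorr,
    Fin.sum_univ_eq_sum_range (fun j : ℕ => extZ x j * starRingEnd ℂ (extZ x (j + m))) n]
  refine (Finset.sum_subset (Finset.range_mono (n.sub_le m)) fun j _ hj => ?_).symm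
  rw [Finset.mem_range] at hj
  rw [extZ_eq_zero x (j := j + m) (by omega), map_zero, mul_zero]

lemma laurentAutocorr_sigPoly_eq {x x' : Fin n → ℂ}
    (h : ∀ m : Fin n, autocorr x' m = autocorr x m) :
    laurentAutocorr (sigPoly x) = laurentAutocorr (sigPoly x') := by
  have hneg (m : ℕ) : (laurentAutocorr (sigPoly x)).coeff (-m) =
      (laurentAutocorr (sigPoly x')).coeff (-m) := by
    rw [coeff_laurentAutocorr_sigPoly_neg, coeff_laurentAutocorr_sigPoly_neg]
    by_cases hm : m < n
    · exact (h ⟨m, hm⟩).symm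
    · rw [autocorr, autocorr, Nat.sub_eq_zero_of_le (not_lt.1 hm), Finset.sum_range_zero,
        Finset.sum_range_zero]
  ext j
  obtain ⟨m, rfl | rfl⟩ := j.eq_nat_or_neg
  · have hm := hneg m
    rw [coeff_laurentAutocorr_sparsePoly_neg, coeff_laurentAutocorr_sparsePoly_neg] at hm
    exact (starRingEnd ℂ).injective hm
  · exact hneg m

lemma norm_eq_one_of_mul_conj_eq_one {u : ℂ} (hu : u * starRingEnd ℂ u = 1) : ‖u‖ = 1 := by
  rw [Complex.mul_conj'] at hu
  exact (pow_eq_one_iff_of_nonneg (norm_nonneg u) two_ne_zero).1 (by exact_mod_cast hu)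

lemma equivSig_of_X_pow_mul_eq {x x' : Fin n → ℂ} {u : ℂ} (hu : ‖u‖ = 1) {a b : ℕ}
    (h : X ^ a * sigPoly x' = Polynomial.C u * (X ^ b * sigPoly x)) : equivSig x x' := by
  refine ⟨u, b - a, hu, .inl fun j => ?_⟩
  have hj := congrArg (fun f => (toLaurent f).coeff (j + a)) h
  simp only [map_mul, toLaurent_C, toLaurent_X_pow, T_mul, laurent_coeff_C_mul, laurent_coeff_mul_T,
    coeff_toLaurent_sigPoly] at hj
  convert hj using 3 <;> ring

lemma equivSig_of_X_pow_mul_eq_conjMirror {x x' : Fin n → ℂ} {u : ℂ} (hu : ‖u‖ = 1) {a b : ℕ}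
    (h : X ^ a * sigPoly x' = Polynomial.C u * conjMirror (X ^ b * sigPoly x)) : equivSig x x' := by
  rw [conjMirror_mul, conjMirror_X_pow] at h
  refine ⟨u, b - a + (sigPoly x).natDegree + (sigPoly x).natTrailingDegree, hu,
    .inr fun j => ?_⟩
  have hj := congrArg (fun f => (toLaurent f).coeff (j + a)) h
  simp only [map_mul, toLaurent_C, toLaurent_X_pow, T_mul, laurent_coeff_C_mul, laurent_coeff_mul_T,
    toLaurent_conjMirror, coeff_toLaurent_sigPoly, coeff_invert_toLaurent_map_sigPoly] at hj
  convert hj using 4 <;> ring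

lemma equivSig.symm {x x' : Fin n → ℂ} (h : equivSig x x') : equivSig x' x := by
  obtain ⟨u, m, hu, h⟩ := h
  have hu' : u * starRingEnd ℂ u = 1 := by rw [Complex.mul_conj', hu]; norm_num
  obtain hshift | hflip := h
  · refine ⟨starRingEnd ℂ u, -m, by rw [RCLike.norm_conj, hu], .inl fun j => ?_⟩
    rw [hshift, sub_neg_eq_add, add_sub_cancel_right]
    linear_combination -extZ x j * hu'
  · refine ⟨u, m, hu, .inr fun j => ?_⟩
    rw [hflip, sub_sub_cancel, map_mul, starRingEnd_self_apply]
    linear_combination -extZ x j * hu'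

lemma sigPoly_sigOn {S : Finset ℕ} (hSn : ∀ i ∈ S, i < n) (c : ↥S → ℂ) :
    sigPoly (sigOn (n := n) S c) = sparsePoly c Subtype.val := by
  symm
  refine Finset.sum_of_injOn (fun s => (⟨s, hSn s s.2⟩ : Fin n))
    (fun s _ t _ hst => Subtype.ext (congrArg Fin.val hst))
    (fun _ _ => Finset.mem_coe.2 (Finset.mem_univ _))
    (fun i _ hi => ?_) fun s _ => ?_
  · have hiS : (i : ℕ) ∉ S := fun hiS => hi ⟨⟨i, hiS⟩, Finset.mem_coe.2 (Finset.mem_univ _), rfl⟩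
    simp only [sigOn, dif_neg hiS, map_zero, zero_mul]
  · simp only [sigOn, dif_pos s.2]

lemma not_isArithProg_image_add {S : Finset ℕ} (hS : ¬ IsArithProg S) (m : ℕ) :
    ¬ IsArithProg (Finset.univ.image fun s : ↥S => (s : ℕ) + m) := by
  rw [show (Finset.univ.image fun s : ↥S => (s : ℕ) + m) = S.image (· + m) by ext; simp]
  exact fun h => hS h.of_image_add_right

variable {K : Type*} [Field K] [IsAlgClosed K] [Algebra K ℂ] {S : Finset ℕ} {c : ↥S → ℂ}
  {x : Fin n → ℂ}

lemma equivSig_of_X_pow_mul_mul_conjMirror_eq [Nonempty ↥S]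
    (hK : ∀ r : K, starRingEnd ℂ (algebraMap K ℂ r) ∈ Set.range (algebraMap K ℂ))
    (hSn : ∀ i ∈ S, i < n) (hap : ¬ IsArithProg S)
    (hgen : AlgebraicIndependent K (Sum.elim c (star c)))
    (hcard : {i : Fin n | x i ≠ 0}.ncard ≤ S.card) {a b : ℕ}
    (h : X ^ a * sparsePoly c (fun s : ↥S => (s : ℕ)) *
        conjMirror (X ^ a * sparsePoly c (fun s : ↥S => (s : ℕ))) =
      X ^ b * sigPoly x * conjMirror (X ^ b * sigPoly x)) :
    equivSig x (sigOn (n := n) S c) := by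
  have he : Function.Injective fun s : ↥S => (s : ℕ) + a := fun s t hst =>
    Subtype.ext (Nat.add_right_cancel hst)
  have hsupp : (X ^ b * sigPoly x).support.card ≤ Fintype.card ↥S := by
    rw [X_pow_mul_sparsePoly, Fintype.card_coe]
    exact (card_support_sparsePoly_le _ _).trans hcard
  rw [X_pow_mul_sparsePoly] at h
  obtain ⟨u, hu, hshift | hflip⟩ := eq_C_mul_or_eq_C_mul_conjMirror_of_mul_conjMirror_eq hK he hgen
    (not_isArithProg_image_add hap a) hsupp h
  · rw [← X_pow_mul_sparsePoly, ← sigPoly_sigOn hSn] at hshift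
    exact (equivSig_of_X_pow_mul_eq (norm_eq_one_of_mul_conj_eq_one hu) hshift).symm
  · rw [← X_pow_mul_sparsePoly, ← sigPoly_sigOn hSn] at hflip
    exact (equivSig_of_X_pow_mul_eq_conjMirror (norm_eq_one_of_mul_conj_eq_one hu) hflip).symm

theorem equivSig_of_algebraicIndependent
    (hK : ∀ r : K, starRingEnd ℂ (algebraMap K ℂ r) ∈ Set.range (algebraMap K ℂ))
    (hSn : ∀ i ∈ S, i < n) (hap : ¬ IsArithProg S)
    (hgen : AlgebraicIndependent K (Sum.elim c (star c)))
    (hcard : {i : Fin n | x i ≠ 0}.ncard ≤ S.card)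
    (h : ∀ m : Fin n, autocorr x m = autocorr (sigOn (n := n) S c) m) :
    equivSig x (sigOn (n := n) S c) := by
  obtain rfl | hS := S.eq_empty_or_nonempty
  · exact absurd ⟨0, 0, by simp⟩ hap
  have : Nonempty ↥S := hS.to_subtype
  have hc₀ : c (Classical.arbitrary ↥S) ≠ 0 :=
    (hgen.comp Sum.inl Sum.inl_injective).ne_zero (Classical.arbitrary ↥S)
  have hacorr := laurentAutocorr_sigPoly_eq h
  rw [sigPoly_sigOn hSn] at hacorr
  exact equivSig_of_X_pow_mul_mul_conjMirror_eq hK hSn hap hgen hcard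
    (X_pow_mul_mul_conjMirror_eq (sparsePoly_ne_zero Subtype.val_injective hc₀) hacorr)

end Signals

section AlgebraicNumbers

lemma countable_algebraicClosure_rat : Countable (algebraicClosure ℚ ℂ) :=
  ((Algebraic.countable ℚ ℂ).mono fun _ hz => mem_algebraicClosure_iff.1 hz).to_subtype

lemma starRingEnd_algebraicClosure_rat_mem_range (r : algebraicClosure ℚ ℂ) :
    starRingEnd ℂ (algebraMap _ ℂ r) ∈ Set.range (algebraMap (algebraicClosure ℚ ℂ) ℂ) :=
  ⟨⟨_, mem_algebraicClosure_iff.2 ((mem_algebraicClosure_iff.1 r.2).algHom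
    (Complex.conjAe.toAlgHom.restrictScalars ℚ))⟩, rfl⟩

end AlgebraicNumbers

/-- If `S ⊆ {0,…,n−1}` with `|S| = k`, `3 ≤ k ≤ n−1`, is an aperiodic support (not an
arithmetic progression), then for (Lebesgue-) almost all nonvanishing value assignments
`c ∈ (ℂ\{0})^S`, every signal with at most `k` nonzero entries and the same autocorrelation
as `x(c)` is equivalent to `x(c)` up to time-shift, conjugate-flip and global phase. -/
theorem aperiodic_support_almost_always_unique
    (n k : ℕ) (hn : 4 ≤ n) (hk3 : 3 ≤ k) (hkn : k ≤ n - 1)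
    (S : Finset ℕ) (hScard : S.card = k) (hSn : ∀ i ∈ S, i < n)
    (haper : ¬ ∃ a d : ℕ, S = Finset.image (fun i => a + i * d) (Finset.range k)) :
    volume {c : ↥S → ℂ |
      (∀ i, c i ≠ 0) ∧
      ∃ x' : Fin n → ℂ, {i : Fin n | x' i ≠ 0}.ncard ≤ k ∧
        (∀ m : Fin n, autocorr x' (m : ℕ) = autocorr (sigOn (n := n) S c) (m : ℕ)) ∧
        ¬ equivSig x' (sigOn (n := n) S c)} = 0 := by
  subst hScard
  have : Countable (algebraicClosure ℚ ℂ) := countable_algebraicClosure_rat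
  have : IsAlgClosed (algebraicClosure ℚ ℂ) := (algebraicClosure.isAlgClosure ℚ ℂ).isAlgClosed
  have hgen := ae_algebraicIndependent_sumElim_star (algebraicClosure ℚ ℂ) (ι := ↥S)
  refine measure_mono_null ?_ (ae_iff.1 hgen)
  rintro c ⟨-, x', hcard, hacorr, hne⟩ hc
  exact hne <| equivSig_of_algebraicIndependent starRingEnd_algebraicClosure_rat_mem_range
    hSn haper hc hcard hacorr
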